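/- (i) If Ω = Ω_D is a p-symmetric domain in M with Ω ∩ ℝ^{p+1} = ∅, then GSR(Ω_D) is strictly contained in GSM(Ω). (ii) If Ω = Ω_D is a p-symmetric domain in M with Ω ∩ ℝ^{p+1} ≠ ∅, then GSM(Ω) = GSR(Ω_D). -/

import Mathlib

open scoped BigOperators
open Filter Topology

namespace GPSM

variable (A : Type*) [NormedAddCommGroup A] [NormedSpace ℝ A] [Mul A] [One A]

/-- `A` is a real alternative algebra with unit `1`, of finite dimension `d > 1`,
equipped with an anti-involution `conj` (a real-linear map with `(a^c)^c = a`,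
`(ab)^c = b^c a^c`, fixing the reals).  The associator is alternating (left/right
alternative laws). -/
structure IsAltStarAlg (conj : A → A) : Prop where
  finDim : FiniteDimensional ℝ A
  one_lt_finrank : 1 < Module.finrank ℝ A
  mul_add' : ∀ a b c : A, a * (b + c) = a * b + a * c
  add_mul' : ∀ a b c : A, (a + b) * c = a * c + b * c
  smul_mul' : ∀ (r : ℝ) (a b : A), (r • a) * b = r • (a * b)
  mul_smul' : ∀ (r : ℝ) (a b : A), a * (r • b) = r • (a * b)
  one_mul' : ∀ a : A, 1 * a = a
  mul_one' : ∀ a : A, a * 1 = a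
  alt_left : ∀ a b : A, a * (a * b) = a * a * b
  alt_right : ∀ a b : A, a * b * b = a * (b * b)
  conj_add : ∀ a b : A, conj (a + b) = conj a + conj b
  conj_smul : ∀ (r : ℝ) (a : A), conj (r • a) = r • conj a
  conj_conj : ∀ a : A, conj (conj a) = a
  conj_mul : ∀ a b : A, conj (a * b) = conj b * conj a
  conj_one : conj 1 = 1

/-- `v 0, v 1, …, v m` is a hypercomplex basis of the hypercomplex subspace
`M = span(v 0, …, v m)` of `A`: `v 0 = 1`, `t(v s) = 0`, `n(v s) = 1`, the `v s`
anticommute for distinct `s, t ∈ {1,…,m}`, they are linearly independent, and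
`M` is contained in the quadratic cone `Q_A`. -/
structure IsHypBasis (conj : A → A) (v : ℕ → A) (m : ℕ) : Prop where
  v_zero : v 0 = 1
  trace_zero : ∀ s, 1 ≤ s → s ≤ m → v s + conj (v s) = 0
  norm_one : ∀ s, 1 ≤ s → s ≤ m → v s * conj (v s) = 1
  anticomm : ∀ s t, 1 ≤ s → s ≤ m → 1 ≤ t → t ≤ m → s ≠ t → v s * v t = -(v t * v s)
  indep : LinearIndependent ℝ (fun i : Fin (m + 1) => v i)
  mem_cone : ∀ x ∈ Submodule.span ℝ (Set.range fun i : Fin (m + 1) => v (i : ℕ)),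
      ∃ tr nr : ℝ, x + conj x = tr • (1 : A) ∧ x * conj x = nr • (1 : A) ∧
        ((∃ r : ℝ, x = r • (1 : A)) ∨ tr ^ 2 < 4 * nr)

variable {A}

/-- Identification of `ℝ^{m+1}` with the hypercomplex subspace `M`:
`(x_0,…,x_m) ↦ Σ x_s • v s`. -/
def emb (v : ℕ → A) (m : ℕ) (x : Fin (m + 1) → ℝ) : A :=
  ∑ s : Fin (m + 1), x s • v (s : ℕ)

/-- First `p+1` coordinates of a point of `M ≅ ℝ^{m+1}`, i.e. the `x_p`-part. -/
def projP (m p : ℕ) (x : Fin (m + 1) → ℝ) : Fin (p + 1) → ℝ := fun s =>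
  if h : (s : ℕ) < m + 1 then x ⟨(s : ℕ), h⟩ else 0

/-- Inclusion `ℝ^{p+1} ⊆ ℝ^{m+1}` (remaining coordinates `0`). -/
def injP (m p : ℕ) (y : Fin (p + 1) → ℝ) : Fin (m + 1) → ℝ := fun s =>
  if h : (s : ℕ) < p + 1 then y ⟨(s : ℕ), h⟩ else 0

/-- The coordinates of `x_q` (last `q = m - p` coordinates of `x`). -/
def xqpart (m p : ℕ) (x : Fin (m + 1) → ℝ) : Fin (m + 1) → ℝ := fun s =>
  if (s : ℕ) ≤ p then 0 else x s

/-- The coordinates of `x_p` inside `ℝ^{m+1}`. -/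
def xppart (m p : ℕ) (x : Fin (m + 1) → ℝ) : Fin (m + 1) → ℝ := fun s =>
  if (s : ℕ) ≤ p then x s else 0

/-- `r = |x_q|`. -/
noncomputable def rad (m p : ℕ) (x : Fin (m + 1) → ℝ) : ℝ :=
  Real.sqrt (∑ s : Fin (m + 1), (xqpart m p x s) ^ 2)

/-- `ω = x_q / |x_q|` (coordinates), `0` when `x_q = 0`. -/
noncomputable def normq (m p : ℕ) (x : Fin (m + 1) → ℝ) : Fin (m + 1) → ℝ :=
  (rad m p x)⁻¹ • xqpart m p x

/-- The reflection `x = x_p + x_q ↦ x_⋄ = x_p - x_q`. -/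
def reflP (m p : ℕ) (x : Fin (m + 1) → ℝ) : Fin (m + 1) → ℝ := fun s =>
  if (s : ℕ) ≤ p then x s else -x s

/-- The sphere `𝕊 = {x_q ∈ span(v_{p+1},…,v_m) : x_q² = -1}`, in coordinates. -/
def Sph (v : ℕ → A) (m p : ℕ) : Set (Fin (m + 1) → ℝ) :=
  {w | (∀ s : Fin (m + 1), (s : ℕ) ≤ p → w s = 0) ∧ emb v m w * emb v m w = -1}

/-- The point `x_p + r ω` of `M ≅ ℝ^{m+1}`. -/
def pt (m p : ℕ) (w : Fin (m + 1) → ℝ) (y : Fin (p + 1) → ℝ) (r : ℝ) :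
    Fin (m + 1) → ℝ :=
  injP m p y + r • w

/-- The slice `Ω_ω ⊆ ℝ^{p+2}` of `Ω` at `ω`. -/
def sliceSet (m p : ℕ) (Ω : Set (Fin (m + 1) → ℝ)) (w : Fin (m + 1) → ℝ) :
    Set ((Fin (p + 1) → ℝ) × ℝ) := {z | pt m p w z.1 z.2 ∈ Ω}

/-- The restriction `f_ω` of `f` to the slice at `ω`, as a function on `ℝ^{p+2}`. -/
def sliceFun (m p : ℕ) (f : (Fin (m + 1) → ℝ) → A) (w : Fin (m + 1) → ℝ) :
    (Fin (p + 1) → ℝ) × ℝ → A := fun z => f (pt m p w z.1 z.2)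

/-- Partial derivative `∂_{x_s}` of a function on `ℝ^{m+1}`. -/
noncomputable def pdF (m : ℕ) (s : Fin (m + 1)) (f : (Fin (m + 1) → ℝ) → A)
    (x : Fin (m + 1) → ℝ) : A := fderiv ℝ f x (Pi.single s 1)

/-- Partial derivative `∂_{x_s}` of a function on `ℝ^{p+1}`. -/
noncomputable def pdP (p : ℕ) (s : Fin (p + 1)) (g : (Fin (p + 1) → ℝ) → A)
    (y : Fin (p + 1) → ℝ) : A := fderiv ℝ g y (Pi.single s 1)

/-- Partial derivative `∂_{x_s}` of a function on `ℝ^{p+2} = ℝ^{p+1} × ℝ`. -/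
noncomputable def pdSx (p : ℕ) (s : Fin (p + 1)) (G : (Fin (p + 1) → ℝ) × ℝ → A)
    (z : (Fin (p + 1) → ℝ) × ℝ) : A := fderiv ℝ G z (Pi.single s 1, 0)

/-- Partial derivative `∂_r` of a function on `ℝ^{p+2} = ℝ^{p+1} × ℝ`. -/
noncomputable def pdSr (p : ℕ) (G : (Fin (p + 1) → ℝ) × ℝ → A)
    (z : (Fin (p + 1) → ℝ) × ℝ) : A := fderiv ℝ G z (0, 1)

/-- Second partial derivative `∂_r²`. -/
noncomputable def pdSr2 (p : ℕ) (G : (Fin (p + 1) → ℝ) × ℝ → A)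
    (z : (Fin (p + 1) → ℝ) × ℝ) : A := pdSr p (pdSr p G) z

/-- The operator `Σ_{lo ≤ s ≤ hi} v_s ∂_{x_s}` on functions on `ℝ^{m+1}`.
`Dop v m 0 p` is `D_{x_p}`, `Dop v m (p+1) m` is `D_{x_q}`, `Dop v m 0 m` is `D_x`. -/
noncomputable def Dop (v : ℕ → A) (m lo hi : ℕ) (f : (Fin (m + 1) → ℝ) → A)
    (x : Fin (m + 1) → ℝ) : A :=
  ∑ s : Fin (m + 1), if lo ≤ (s : ℕ) ∧ (s : ℕ) ≤ hi then v (s : ℕ) * pdF m s f x else 0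

/-- The conjugate operator `∂_{x_0} - Σ_{1 ≤ s ≤ hi} v_s ∂_{x_s}` on functions on
`ℝ^{m+1}`; `Dbarop v m p` is `D̄_{x_p}`, `Dbarop v m m` is `D̄_x`. -/
noncomputable def Dbarop (v : ℕ → A) (m hi : ℕ) (f : (Fin (m + 1) → ℝ) → A)
    (x : Fin (m + 1) → ℝ) : A :=
  pdF m 0 f x -
    ∑ s : Fin (m + 1), if 1 ≤ (s : ℕ) ∧ (s : ℕ) ≤ hi then v (s : ℕ) * pdF m s f x else 0

/-- The operator `D_{x_p} = Σ_{s=0}^p v_s ∂_{x_s}` on functions on `ℝ^{p+1}`. -/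
noncomputable def DopP (v : ℕ → A) (p : ℕ) (g : (Fin (p + 1) → ℝ) → A)
    (y : Fin (p + 1) → ℝ) : A :=
  ∑ s : Fin (p + 1), v (s : ℕ) * pdP p s g y

/-- The operator `D̄_{x_p} = ∂_{x_0} - Σ_{s=1}^p v_s ∂_{x_s}` on functions on `ℝ^{p+1}`. -/
noncomputable def DbaropP (v : ℕ → A) (p : ℕ) (g : (Fin (p + 1) → ℝ) → A)
    (y : Fin (p + 1) → ℝ) : A :=
  pdP p 0 g y - ∑ s : Fin (p + 1), if 1 ≤ (s : ℕ) then v (s : ℕ) * pdP p s g y else 0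

/-- The operator `D_{x_p}` on functions on `ℝ^{p+2} = ℝ^{p+1} × ℝ`. -/
noncomputable def DopSx (v : ℕ → A) (p : ℕ) (G : (Fin (p + 1) → ℝ) × ℝ → A)
    (z : (Fin (p + 1) → ℝ) × ℝ) : A :=
  ∑ s : Fin (p + 1), v (s : ℕ) * pdSx p s G z

/-- The operator `D̄_{x_p}` on functions on `ℝ^{p+2} = ℝ^{p+1} × ℝ`. -/
noncomputable def DbaropSx (v : ℕ → A) (p : ℕ) (G : (Fin (p + 1) → ℝ) × ℝ → A)
    (z : (Fin (p + 1) → ℝ) × ℝ) : A :=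
  pdSx p 0 G z - ∑ s : Fin (p + 1), if 1 ≤ (s : ℕ) then v (s : ℕ) * pdSx p s G z else 0

/-- The Laplacian `Δ_x` on functions on `ℝ^{m+1}`. -/
noncomputable def lapF (m : ℕ) (f : (Fin (m + 1) → ℝ) → A)
    (x : Fin (m + 1) → ℝ) : A :=
  ∑ s : Fin (m + 1), pdF m s (pdF m s f) x

/-- The Laplacian `Δ_{x_p}` on functions on `ℝ^{p+1}`. -/
noncomputable def lapP (p : ℕ) (g : (Fin (p + 1) → ℝ) → A)
    (y : Fin (p + 1) → ℝ) : A :=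
  ∑ s : Fin (p + 1), pdP p s (pdP p s g) y

/-- Iterated Laplacian `Δ_x^k`. -/
noncomputable def lapIterF (m k : ℕ) (f : (Fin (m + 1) → ℝ) → A) :
    (Fin (m + 1) → ℝ) → A :=
  (fun g => lapF m g)^[k] f

/-- Iterated Laplacian `Δ_{x_p}^k`. -/
noncomputable def lapIterP (p k : ℕ) (g : (Fin (p + 1) → ℝ) → A) :
    (Fin (p + 1) → ℝ) → A :=
  (fun h => lapP p h)^[k] g

/-- The Laplacian `Δ_{x'} = Δ_{x_p} + ∂_r²` on functions on `ℝ^{p+2}`. -/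
noncomputable def lapSx (p : ℕ) (G : (Fin (p + 1) → ℝ) × ℝ → A)
    (z : (Fin (p + 1) → ℝ) × ℝ) : A :=
  (∑ s : Fin (p + 1), pdSx p s (pdSx p s G) z) + pdSr2 p G z

/-- The slice Cauchy-Riemann operator `D_ω = D_{x_p} + ω ∂_r` applied to a function
on `ℝ^{p+2}`, where `ω` is given in coordinates by `w`. -/
noncomputable def DomCR (v : ℕ → A) (m p : ℕ) (w : Fin (m + 1) → ℝ)
    (G : (Fin (p + 1) → ℝ) × ℝ → A) (z : (Fin (p + 1) → ℝ) × ℝ) : A :=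
  DopSx v p G z + emb v m w * pdSr p G z

/-- `f` is left generalized partial-slice monogenic (of type `(p, m-p)`) on `Ω`. -/
def GSM (v : ℕ → A) (m p : ℕ) (f : (Fin (m + 1) → ℝ) → A)
    (Ω : Set (Fin (m + 1) → ℝ)) : Prop :=
  ∀ w ∈ Sph v m p, ContDiffOn ℝ 1 (sliceFun m p f w) (sliceSet m p Ω w) ∧
    ∀ z ∈ sliceSet m p Ω w, DomCR v m p w (sliceFun m p f w) z = 0

/-- `Ω` is partially symmetric with respect to `ℝ^{p+1}`. -/
def PSym (v : ℕ → A) (m p : ℕ) (Ω : Set (Fin (m + 1) → ℝ)) : Prop :=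
  ∀ x ∈ Ω, ∀ w ∈ Sph v m p, xppart m p x + rad m p x • w ∈ Ω

/-- `Ω` is a slice domain: a domain meeting `ℝ^{p+1}` all of whose slices are
domains in `ℝ^{p+2}`. -/
def SliceDomain (v : ℕ → A) (m p : ℕ) (Ω : Set (Fin (m + 1) → ℝ)) : Prop :=
  IsOpen Ω ∧ IsConnected Ω ∧ (∃ x ∈ Ω, xqpart m p x = 0) ∧
    ∀ w ∈ Sph v m p, IsConnected (sliceSet m p Ω w)

/-- The reflection `(x_p, r) ↦ (x_p, -r)` of `ℝ^{p+2}`. -/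
def reflD (p : ℕ) (z : (Fin (p + 1) → ℝ) × ℝ) : (Fin (p + 1) → ℝ) × ℝ := (z.1, -z.2)

/-- The p-symmetric completion `Ω_D ⊆ M` of `D ⊆ ℝ^{p+2}`. -/
def OmegaD (v : ℕ → A) (m p : ℕ) (D : Set ((Fin (p + 1) → ℝ) × ℝ)) :
    Set (Fin (m + 1) → ℝ) :=
  {x | ∃ w ∈ Sph v m p, ∃ z ∈ D, x = pt m p w z.1 z.2}

/-- `(F₁, F₂)` satisfies the even-odd (stem function) conditions on `D`. -/
def IsStem (p : ℕ) (D : Set ((Fin (p + 1) → ℝ) × ℝ))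
    (F₁ F₂ : (Fin (p + 1) → ℝ) × ℝ → A) : Prop :=
  ∀ z ∈ D, F₁ (reflD p z) = F₁ z ∧ F₂ (reflD p z) = -F₂ z

/-- `f` is the generalized partial-slice function induced by the stem `(F₁, F₂)`:
`f(x_p + rω) = F₁(x_p, r) + ω F₂(x_p, r)`. -/
def Induced (v : ℕ → A) (m p : ℕ) (D : Set ((Fin (p + 1) → ℝ) × ℝ))
    (F₁ F₂ : (Fin (p + 1) → ℝ) × ℝ → A) (f : (Fin (m + 1) → ℝ) → A) : Prop :=
  ∀ w ∈ Sph v m p, ∀ z ∈ D, f (pt m p w z.1 z.2) = F₁ z + emb v m w * F₂ z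

/-- The generalized Cauchy-Riemann system for the stem `(F₁, F₂)` on `D`. -/
def StemCR (v : ℕ → A) (p : ℕ) (D : Set ((Fin (p + 1) → ℝ) × ℝ))
    (F₁ F₂ : (Fin (p + 1) → ℝ) × ℝ → A) : Prop :=
  ∀ z ∈ D, DopSx v p F₁ z - pdSr p F₂ z = 0 ∧ DbaropSx v p F₂ z + pdSr p F₁ z = 0

/-- `f` is generalized partial-slice regular on `Ω_D`. -/
def MemGSR (v : ℕ → A) (m p : ℕ) (D : Set ((Fin (p + 1) → ℝ) × ℝ))
    (f : (Fin (m + 1) → ℝ) → A) : Prop :=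
  ∃ F₁ F₂ : (Fin (p + 1) → ℝ) × ℝ → A, IsStem p D F₁ F₂ ∧
    ContDiffOn ℝ 1 F₁ D ∧ ContDiffOn ℝ 1 F₂ D ∧
    Induced v m p D F₁ F₂ f ∧ StemCR v p D F₁ F₂

/-- `f` is a generalized partial-slice function on `Ω`. -/
def MemGS (v : ℕ → A) (m p : ℕ) (Ω : Set (Fin (m + 1) → ℝ))
    (f : (Fin (m + 1) → ℝ) → A) : Prop :=
  ∃ F₁ F₂ : (Fin (p + 1) → ℝ) × ℝ → A,
    (∀ z : (Fin (p + 1) → ℝ) × ℝ, F₁ (reflD p z) = F₁ z ∧ F₂ (reflD p z) = -F₂ z) ∧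
    ∀ x ∈ Ω, f x = F₁ (projP m p x, rad m p x) +
      emb v m (normq m p x) * F₂ (projP m p x, rad m p x)

/-- Non-associative power: `a^n` with products taken from the right. -/
def apow (a : A) (n : ℕ) : A := (fun b => a * b)^[n] 1

/-- Partial even part `PE[f](x) = (f(x) + f(x_⋄))/2`. -/
noncomputable def PE (m p : ℕ) (f : (Fin (m + 1) → ℝ) → A)
    (x : Fin (m + 1) → ℝ) : A := (2 : ℝ)⁻¹ • (f x + f (reflP m p x))

/-- Partial odd part `PO[f](x) = (f(x) - f(x_⋄))/2`. -/
noncomputable def PO (m p : ℕ) (f : (Fin (m + 1) → ℝ) → A)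
    (x : Fin (m + 1) → ℝ) : A := (2 : ℝ)⁻¹ • (f x - f (reflP m p x))

/-- `Ω₀* = {x_p + x_q : x_p ∈ Ω₀, x_q ∈ ℝ^q}`. -/
def Omega0star (m p : ℕ) (Ω₀ : Set (Fin (p + 1) → ℝ)) : Set (Fin (m + 1) → ℝ) :=
  {x | projP m p x ∈ Ω₀}

/-- The spherical derivative `f'_s(x) = (1/2) x_q⁻¹ (f(x) - f(x_⋄))`
(using `x_q⁻¹ = -x_q/|x_q|²`). -/
noncomputable def sder (v : ℕ → A) (m p : ℕ) (f : (Fin (m + 1) → ℝ) → A)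
    (x : Fin (m + 1) → ℝ) : A :=
  -(((2 : ℝ) * rad m p x ^ 2)⁻¹) • (emb v m (xqpart m p x) * (f x - f (reflP m p x)))

/-- The spherical Dirac operator
`Γ f = -(1/2) Σ_{p+1 ≤ i,j ≤ m} v_i (v_j (L_{ij} f))`. -/
noncomputable def sphericalGamma (v : ℕ → A) (m p : ℕ) (f : (Fin (m + 1) → ℝ) → A)
    (x : Fin (m + 1) → ℝ) : A :=
  -((2 : ℝ)⁻¹) • ∑ i : Fin (m + 1), ∑ j : Fin (m + 1),
    if p < (i : ℕ) ∧ p < (j : ℕ) then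
      v (i : ℕ) * (v (j : ℕ) * (x i • pdF m j f x - x j • pdF m i f x)) else 0

/-- The slice Cauchy-Riemann operator `D_ω` applied to (the slice restriction of) a
function `f` on `M`, at the point `x` (with `ω = x_q/|x_q|`). -/
noncomputable def DomCRat (v : ℕ → A) (m p : ℕ) (f : (Fin (m + 1) → ℝ) → A)
    (x : Fin (m + 1) → ℝ) : A :=
  DomCR v m p (normq m p x) (sliceFun m p f (normq m p x)) (projP m p x, rad m p x)

/-- `f` is left monogenic on `Ω`: `f ∈ C¹` and `D_x f = 0`. -/
def Monogenic (v : ℕ → A) (m : ℕ) (f : (Fin (m + 1) → ℝ) → A)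
    (Ω : Set (Fin (m + 1) → ℝ)) : Prop :=
  ContDiffOn ℝ 1 f Ω ∧ ∀ x ∈ Ω, Dop v m 0 m f x = 0

/-- `f` is harmonic on `Ω`: `f ∈ C²` and `Δ_x f = 0`. -/
def Harmonic (m : ℕ) (f : (Fin (m + 1) → ℝ) → A)
    (Ω : Set (Fin (m + 1) → ℝ)) : Prop :=
  ContDiffOn ℝ 2 f Ω ∧ ∀ x ∈ Ω, lapF m f x = 0

/-- A family of functions converges normally (locally a summable uniform bound). -/
def NormallyConvOn {E F : Type*} [TopologicalSpace E] [NormedAddCommGroup F]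
    (u : ℕ → E → F) (s : Set E) : Prop :=
  ∀ x ∈ s, ∃ U ∈ nhds x, ∃ c : ℕ → ℝ, Summable c ∧ ∀ k : ℕ, ∀ y ∈ U, ‖u k y‖ ≤ c k

/-- The generalized partial-slice CK-extension
`CK[f₀](x) = Σ_k (r^{2k}/(2k)!)(-Δ_{x_p})^k f₀(x_p)
  + ω Σ_k (r^{2k+1}/(2k+1)!)(-Δ_{x_p})^k (D_{x_p} f₀)(x_p)`. -/
noncomputable def CKe (v : ℕ → A) (m p : ℕ) (f₀ : (Fin (p + 1) → ℝ) → A)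
    (x : Fin (m + 1) → ℝ) : A :=
  (∑' k : ℕ, (((-1 : ℝ) ^ k * rad m p x ^ (2 * k)) / (2 * k).factorial) •
      lapIterP p k f₀ (projP m p x)) +
  emb v m (normq m p x) *
    ∑' k : ℕ, (((-1 : ℝ) ^ k * rad m p x ^ (2 * k + 1)) / (2 * k + 1).factorial) •
      lapIterP p k (DopP v p f₀) (projP m p x)

/-- The coefficient `Γ(q/2)(-1)^k r^{2k} / (2^{2k} k! Γ(k + q/2))`. -/
noncomputable def hgckC (q k : ℕ) (r : ℝ) : ℝ :=
  (Real.Gamma ((q : ℝ) / 2) * (-1) ^ k * r ^ (2 * k)) /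
    (2 ^ (2 * k) * (k.factorial : ℝ) * Real.Gamma ((k : ℝ) + (q : ℝ) / 2))

/-- The coefficient `Γ(q/2)(-1)^k r^{2k} / (2^{2k+1} k! Γ(k + q/2 + 1))`. -/
noncomputable def gckC' (q k : ℕ) (r : ℝ) : ℝ :=
  (Real.Gamma ((q : ℝ) / 2) * (-1) ^ k * r ^ (2 * k)) /
    (2 ^ (2 * k + 1) * (k.factorial : ℝ) * Real.Gamma ((k : ℝ) + (q : ℝ) / 2 + 1))

/-- The coefficient `Γ(q/2 + 1)(-1)^k r^{2k} / (2^{2k} k! Γ(k + q/2 + 1))`. -/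
noncomputable def hgckC' (q k : ℕ) (r : ℝ) : ℝ :=
  (Real.Gamma ((q : ℝ) / 2 + 1) * (-1) ^ k * r ^ (2 * k)) /
    (2 ^ (2 * k) * (k.factorial : ℝ) * Real.Gamma ((k : ℝ) + (q : ℝ) / 2 + 1))

/-- The monogenic generalized CK-extension `GCK[A₀]`. -/
noncomputable def GCKe (v : ℕ → A) (m p : ℕ) (A₀ : (Fin (p + 1) → ℝ) → A)
    (x : Fin (m + 1) → ℝ) : A :=
  (∑' k : ℕ, hgckC (m - p) k (rad m p x) • lapIterP p k A₀ (projP m p x)) +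
  emb v m (xqpart m p x) *
    ∑' k : ℕ, gckC' (m - p) k (rad m p x) • lapIterP p k (DopP v p A₀) (projP m p x)

/-- The harmonic generalized CK-extension `HGCK[A₀, A₁]`. -/
noncomputable def HGCKe (v : ℕ → A) (m p : ℕ) (A₀ A₁ : (Fin (p + 1) → ℝ) → A)
    (x : Fin (m + 1) → ℝ) : A :=
  (∑' k : ℕ, hgckC (m - p) k (rad m p x) • lapIterP p k A₀ (projP m p x)) +
  emb v m (xqpart m p x) *
    ∑' k : ℕ, hgckC' (m - p) k (rad m p x) • lapIterP p k A₁ (projP m p x)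

/-- The operator `(1/r)∂_r`, extended to `r = 0` by its limit `∂_r²` (on even
functions). -/
noncomputable def T1 (p : ℕ) (G : (Fin (p + 1) → ℝ) × ℝ → A) :
    (Fin (p + 1) → ℝ) × ℝ → A := fun z =>
  if z.2 = 0 then pdSr2 p G z else (z.2)⁻¹ • pdSr p G z

/-- The operator `∂_r ∘ (1/r)`, extended to `r = 0` by its limit `(1/2)∂_r²` (on odd
functions). -/
noncomputable def T2 (p : ℕ) (G : (Fin (p + 1) → ℝ) × ℝ → A) :
    (Fin (p + 1) → ℝ) × ℝ → A := fun z =>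
  if z.2 = 0 then (2 : ℝ)⁻¹ • pdSr2 p G z
  else fderiv ℝ (fun t : ℝ => t⁻¹ • G (z.1, t)) z.2 1

/-- `C_q(k) = (q-1)(q-3)⋯(q-2k+1)`, `C_q(0) = 1`. -/
noncomputable def cq (q k : ℕ) : ℝ :=
  ∏ i ∈ Finset.range k, ((q : ℝ) - (2 * (i : ℝ) + 1))

/-- Double factorial. -/
def dfac : ℕ → ℕ
  | 0 => 1
  | 1 => 1
  | n + 2 => (n + 2) * dfac n

/-- The Fueter-Sce constant `γ_q = (-1)^{(q-1)/2} (q-1)!!/(q-2)!!`. -/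
noncomputable def gammaQ (q : ℕ) : ℝ :=
  (-1 : ℝ) ^ ((q - 1) / 2) * (dfac (q - 1) : ℝ) / (dfac (q - 2) : ℝ)



section Analysis
set_option linter.unusedSectionVars false
open MeasureTheory Metric

/-- Dual bases and Clifford-type operators used for the abstract Cauchy-Riemann operator. -/
structure CliffData (ι E V : Type*) [Fintype ι] [DecidableEq ι] [NormedAddCommGroup E]
    [NormedSpace ℝ E] [NormedAddCommGroup V] [NormedSpace ℝ V] where
  e : ι → E
  c : ι → E →L[ℝ] ℝ
  L : ι → V →L[ℝ] V
  Lb : ι → V →L[ℝ] V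
  expand : ∀ y, ∑ i, c i y • e i = y
  dual : ∀ i j, c i (e j) = if i = j then 1 else 0
  norm_le : ∀ y, ‖y‖ ^ 2 ≤ ∑ i, (c i y) ^ 2
  cliff : ∀ i j b, Lb i (L j b) + Lb j (L i b) = if i = j then (2 : ℝ) • b else 0

namespace CliffData

variable {ι E V : Type*} [Fintype ι] [DecidableEq ι] [NormedAddCommGroup E]
    [NormedSpace ℝ E] [NormedAddCommGroup V] [NormedSpace ℝ V] (C : CliffData ι E V)

def Q (y : E) : ℝ := ∑ i, (C.c i y) ^ 2

noncomputable def th (s : ℝ) : ℝ := expNegInvGlue (1 - s)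

noncomputable def Psi (s : ℝ) : ℝ := ∫ u in (1 : ℝ)..s, th u / 2

lemma th_contDiff {n : ℕ∞} : ContDiff ℝ n th :=
  expNegInvGlue.contDiff.comp (contDiff_const.sub contDiff_id)

lemma th_zero {s : ℝ} (hs : 1 ≤ s) : th s = 0 := expNegInvGlue.zero_of_nonpos (by linarith)

lemma Psi_hasDerivAt (s : ℝ) : HasDerivAt Psi (th s / 2) s := by
  have hc : Continuous fun u => th u / 2 := (th_contDiff (n := 0)).continuous.div_const 2
  exact intervalIntegral.integral_hasDerivAt_right (hc.intervalIntegrable _ _)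
    (hc.stronglyMeasurableAtFilter _ _) hc.continuousAt

lemma Psi_zero {s : ℝ} (hs : 1 ≤ s) : Psi s = 0 := by
  unfold Psi
  rw [intervalIntegral.integral_congr (g := fun _ => 0)]
  · simp
  · intro u hu
    rw [Set.uIcc_of_le hs] at hu
    simp [th_zero hu.1]

lemma Psi_contDiff : ContDiff ℝ 2 Psi := by
  have h1 : deriv Psi = fun s => th s / 2 := funext fun s => (Psi_hasDerivAt s).deriv
  have : ContDiff ℝ (1 + 1) Psi := by
    rw [contDiff_succ_iff_deriv]
    refine ⟨fun s => (Psi_hasDerivAt s).differentiableAt, by simp, ?_⟩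
    rw [h1]
    exact (th_contDiff (n := 1)).div_const 2
  simpa [one_add_one_eq_two] using this

lemma Q_contDiff {n : WithTop ℕ∞} : ContDiff ℝ n C.Q := by
  unfold Q
  exact ContDiff.sum fun i _ => ((C.c i).contDiff).pow 2

lemma Q_fderiv (y : E) (j : ι) : fderiv ℝ C.Q y (C.e j) = 2 * C.c j y := by
  have h : HasFDerivAt C.Q (∑ i, (2 * (C.c i y)) • C.c i) y := by
    unfold Q
    refine HasFDerivAt.fun_sum fun i _ => ?_
    have := ((C.c i).hasFDerivAt (x := y)).pow 2
    simpa using this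
  rw [h.fderiv]
  simp [C.dual]

noncomputable def phi (y : E) : ℝ := th (C.Q y)
noncomputable def psi (y : E) : ℝ := Psi (C.Q y)

lemma phi_contDiff {n : ℕ∞} : ContDiff ℝ n C.phi := th_contDiff.comp C.Q_contDiff
lemma psi_contDiff : ContDiff ℝ 2 C.psi := Psi_contDiff.comp C.Q_contDiff

lemma phi_cont : Continuous C.phi := (C.phi_contDiff (n := 0)).continuous

lemma phi_nonneg (y : E) : 0 ≤ C.phi y := expNegInvGlue.nonneg _

lemma Q_ge {y : E} (hy : 1 < ‖y‖) : 1 ≤ C.Q y := by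
  have := C.norm_le y
  unfold Q
  nlinarith

lemma phi_zero {y : E} (hy : 1 < ‖y‖) : C.phi y = 0 := th_zero (C.Q_ge hy)
lemma psi_zero {y : E} (hy : 1 < ‖y‖) : C.psi y = 0 := Psi_zero (C.Q_ge hy)

lemma psi_fderiv (y : E) (j : ι) : fderiv ℝ C.psi y (C.e j) = C.phi y * C.c j y := by
  have h : HasFDerivAt C.psi ((th (C.Q y) / 2) • fderiv ℝ C.Q y) y :=
    (Psi_hasDerivAt (C.Q y)).comp_hasFDerivAt y
      ((C.Q_contDiff (n := 1)).differentiable (by simp) y).hasFDerivAt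
  rw [h.fderiv]
  simp only [smul_apply, C.Q_fderiv, phi, smul_eq_mul]
  ring

lemma phi_neg (y : E) : C.phi (-y) = C.phi y := by simp [phi, Q]

variable [FiniteDimensional ℝ E]

lemma phi_supp : HasCompactSupport C.phi := by
  have := FiniteDimensional.proper_real E
  refine HasCompactSupport.intro (isCompact_closedBall 0 1) fun y hy => C.phi_zero ?_
  simpa using hy

lemma psi_supp : HasCompactSupport C.psi := by
  have := FiniteDimensional.proper_real E
  refine HasCompactSupport.intro (isCompact_closedBall 0 1) fun y hy => C.psi_zero ?_
  simpa using hy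

section Meas
variable [MeasurableSpace E] [BorelSpace E] (μ : Measure E) [μ.IsAddHaarMeasure]

lemma phi_int_pos : 0 < ∫ y, C.phi y ∂μ := by
  have h0 : C.phi 0 ≠ 0 := by
    have : 0 < C.phi 0 := expNegInvGlue.pos_of_pos (by simp [Q])
    exact this.ne'
  exact C.phi_cont.integral_pos_of_hasCompactSupport_nonneg_nonzero C.phi_supp C.phi_nonneg h0

variable [FiniteDimensional ℝ V]

/-- Symmetric second-order pairing. -/
lemma pair_symm {g : E → V} (hg : ContDiff ℝ 1 g) (a b : E) :
    ∫ y, fderiv ℝ C.psi y a • fderiv ℝ g y b ∂μ = ∫ y, fderiv ℝ C.psi y b • fderiv ℝ g y a ∂μ := by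
  have hcomp := FiniteDimensional.complete ℝ V
  have hd1 : ∀ a, ContDiff ℝ 1 fun y => fderiv ℝ C.psi y a := fun a =>
    (C.psi_contDiff.fderiv_right (m := 1) (by norm_num [one_add_one_eq_two])).clm_apply
      contDiff_const
  have hs1 : ∀ a, HasCompactSupport fun y => fderiv ℝ C.psi y a := fun a =>
    C.psi_supp.fderiv_apply (𝕜 := ℝ) a
  have hs2 : ∀ a b, HasCompactSupport fun y => fderiv ℝ (fun y => fderiv ℝ C.psi y a) y b :=
    fun a b => (hs1 a).fderiv_apply (𝕜 := ℝ) b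
  have hgc : ∀ b, Continuous fun y => fderiv ℝ g y b := fun b =>
    (hg.continuous_fderiv (by simp)).clm_apply continuous_const
  have hc2 : ∀ a b, Continuous fun y => fderiv ℝ (fun y => fderiv ℝ C.psi y a) y b := fun a b =>
    ((hd1 a).continuous_fderiv (by simp)).clm_apply continuous_const
  have key : ∀ a b, ∫ y, fderiv ℝ C.psi y a • fderiv ℝ g y b ∂μ =
      - ∫ y, fderiv ℝ (fun y => fderiv ℝ C.psi y a) y b • g y ∂μ := by
    intro a b
    refine integral_smul_fderiv_eq_neg_fderiv_smul_of_integrable ?_ ?_ ?_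
      (fun x _ => (hd1 a).differentiable (by simp) x) (fun x _ => hg.differentiable (by simp) x)
    · exact ((hc2 a b).smul hg.continuous).integrable_of_hasCompactSupport ((hs2 a b).smul_right)
    · exact ((hd1 a).continuous.smul (hgc b)).integrable_of_hasCompactSupport ((hs1 a).smul_right)
    · exact ((hd1 a).continuous.smul hg.continuous).integrable_of_hasCompactSupport
        ((hs1 a).smul_right)
  rw [key, key]
  congr 2
  funext y
  have hsym := (C.psi_contDiff.contDiffAt (x := y)).isSymmSndFDerivAt (by simp)
  have hdd : DifferentiableAt ℝ (fderiv ℝ C.psi) y :=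
    ((C.psi_contDiff.fderiv_right (m := 1) (by norm_num [one_add_one_eq_two])).differentiable
      (by simp)) y
  have e1 : ∀ a b, fderiv ℝ (fun y => fderiv ℝ C.psi y a) y b
      = fderiv ℝ (fderiv ℝ C.psi) y b a := by
    intro a b
    rw [fderiv_clm_apply hdd (differentiableAt_const _)]
    simp
  rw [e1, e1, hsym.eq]

lemma pair_zero {g : E → V} (hg : ContDiff ℝ 1 g)
    (hs : ∀ y, ‖y‖ ≤ 1 → ∑ k, C.L k (fderiv ℝ g y (C.e k)) = 0) :
    ∑ j, ∫ y, fderiv ℝ C.psi y (C.e j) • fderiv ℝ g y (C.e j) ∂μ = 0 := by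
  have hcomp := FiniteDimensional.complete ℝ V
  set a : ι → ι → V := fun j k => ∫ y, fderiv ℝ C.psi y (C.e j) • fderiv ℝ g y (C.e k) ∂μ with ha
  have hsym : ∀ j k, a j k = a k j := fun j k => C.pair_symm μ hg _ _
  have hInteg : ∀ j k, Integrable (fun y => fderiv ℝ C.psi y (C.e j) • fderiv ℝ g y (C.e k)) μ := by
    intro j k
    refine Continuous.integrable_of_hasCompactSupport ?_ ?_
    · exact ((C.psi_contDiff.continuous_fderiv (by simp)).clm_apply continuous_const).smul
        ((hg.continuous_fderiv (by simp)).clm_apply continuous_const)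
    · exact HasCompactSupport.smul_right (C.psi_supp.fderiv_apply (𝕜 := ℝ) _)
  have h0 : ∑ j, ∑ k, C.Lb j (C.L k (a j k)) = 0 := by
    have h1 : ∀ j, ∑ k, C.Lb j (C.L k (a j k)) = 0 := by
      intro j
      have : ∀ k, C.Lb j (C.L k (a j k)) =
          ∫ y, C.Lb j (C.L k (fderiv ℝ C.psi y (C.e j) • fderiv ℝ g y (C.e k))) ∂μ := by
        intro k
        have := ((C.Lb j).comp (C.L k)).integral_comp_comm (hInteg j k)
        simpa using this.symm
      simp_rw [this]
      rw [← integral_finsetSum]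
      · rw [integral_eq_zero_of_ae]
        refine Filter.Eventually.of_forall fun y => ?_
        simp only [map_smul, ← Finset.smul_sum, ← map_sum]
        by_cases hy : ‖y‖ ≤ 1
        · simp [hs y hy]
        · rw [C.psi_fderiv, C.phi_zero (not_le.1 hy)]
          simp
      · intro k _
        exact ((C.Lb j).comp (C.L k)).integrable_comp (hInteg j k)
    simp [h1]
  have h0' : ∑ j, ∑ k, C.Lb k (C.L j (a j k)) = 0 := by
    rw [Finset.sum_comm, ← h0]
    refine Finset.sum_congr rfl fun j _ => Finset.sum_congr rfl fun k _ => by rw [hsym]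
  have h2 : ∑ j, (2 : ℝ) • a j j = 0 := by
    have : ∑ j, ∑ k, (C.Lb j (C.L k (a j k)) + C.Lb k (C.L j (a j k))) = 0 := by
      simp only [Finset.sum_add_distrib, h0, h0', add_zero]
    simpa [C.cliff] using this
  rw [← Finset.smul_sum] at h2
  exact (smul_eq_zero.1 h2).resolve_left (by norm_num)

lemma mv_deriv {h : E → V} (hh : ContDiff ℝ 1 h) (x : E) (t : ℝ) :
    HasDerivAt (fun t : ℝ => ∫ y, C.phi y • h (x + t • y) ∂μ)
      (∑ j, ∫ y, fderiv ℝ C.psi y (C.e j) • fderiv ℝ h (x + t • y) (C.e j) ∂μ) t := by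
  have hcomp := FiniteDimensional.complete ℝ V
  have hprop := FiniteDimensional.proper_real E
  have hfc : Continuous (fderiv ℝ h) := hh.continuous_fderiv (by simp)
  obtain ⟨K, hK⟩ := (isCompact_closedBall x (|t| + 1)).exists_bound_of_continuousOn
    hfc.continuousOn
  have hc1 : ∀ t : ℝ, Continuous fun y => C.phi y • h (x + t • y) := fun t =>
    C.phi_cont.smul (hh.continuous.comp (by fun_prop))
  have hline : ∀ t : ℝ, Continuous fun y : E => fderiv ℝ h (x + t • y) := fun t =>
    hfc.comp (by fun_prop)
  have hc2 : Continuous fun y => C.phi y • fderiv ℝ h (x + t • y) y :=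
    C.phi_cont.smul ((hline t).clm_apply continuous_id)
  have main := hasDerivAt_integral_of_dominated_loc_of_deriv_le (μ := μ)
    (F := fun (t : ℝ) y => C.phi y • h (x + t • y)) (x₀ := t) (s := ball t 1)
    (F' := fun t y => C.phi y • fderiv ℝ h (x + t • y) y)
    (bound := fun y => C.phi y * K) (ball_mem_nhds t one_pos)
    (Eventually.of_forall fun t => (hc1 t).aestronglyMeasurable)
    ((hc1 t).integrable_of_hasCompactSupport C.phi_supp.smul_right)
    hc2.aestronglyMeasurable
    (Eventually.of_forall fun y s hs => ?_)
    ((C.phi_cont.integrable_of_hasCompactSupport C.phi_supp).mul_const K)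
    (Eventually.of_forall fun y s hs => ?_)
  · have e : ∀ y, C.phi y • fderiv ℝ h (x + t • y) y =
        ∑ j, fderiv ℝ C.psi y (C.e j) • fderiv ℝ h (x + t • y) (C.e j) := by
      intro y
      have hy := congrArg (fderiv ℝ h (x + t • y)) (C.expand y)
      rw [map_sum] at hy
      rw [← hy, Finset.smul_sum]
      refine Finset.sum_congr rfl fun j _ => ?_
      rw [C.psi_fderiv, map_smul, smul_smul]
    have := main.2
    simp_rw [e] at this
    rwa [integral_finsetSum] at this
    intro j _
    refine Continuous.integrable_of_hasCompactSupport ?_ ?_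
    · exact ((C.psi_contDiff.continuous_fderiv (by simp)).clm_apply continuous_const).smul
        ((hline t).clm_apply continuous_const)
    · exact HasCompactSupport.smul_right (C.psi_supp.fderiv_apply (𝕜 := ℝ) _)
  · by_cases hy : 1 < ‖y‖
    · simp [C.phi_zero hy]
    · rw [not_lt] at hy
      rw [norm_smul, Real.norm_of_nonneg (C.phi_nonneg y)]
      refine mul_le_mul_of_nonneg_left ?_ (C.phi_nonneg y)
      have hs' : |s| ≤ |t| + 1 := by
        rw [mem_ball, Real.dist_eq] at hs
        have := abs_sub_abs_le_abs_sub s t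
        linarith
      have hm : x + s • y ∈ closedBall x (|t| + 1) := by
        rw [mem_closedBall, dist_eq_norm, add_sub_cancel_left, norm_smul, Real.norm_eq_abs]
        nlinarith [abs_nonneg s, norm_nonneg y]
      have h1 := hK _ hm
      have h2 := (fderiv ℝ h (x + s • y)).le_opNorm y
      nlinarith [norm_nonneg (fderiv ℝ h (x + s • y)), norm_nonneg y]
  · have h1 : HasDerivAt (fun s : ℝ => x + s • y) y s := by
      simpa using ((hasDerivAt_id s).smul_const y).const_add x
    exact ((hh.differentiable (by simp) _).hasFDerivAt.comp_hasDerivAt s h1).const_smul _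

lemma mean_value {h : E → V} (hh : ContDiff ℝ 1 h) (x : E)
    (hs : ∀ y ∈ closedBall x 1, ∑ k, C.L k (fderiv ℝ h y (C.e k)) = 0) :
    ∫ y, C.phi y • h (x + y) ∂μ = (∫ y, C.phi y ∂μ) • h x := by
  have hcomp := FiniteDimensional.complete ℝ V
  have hz : ∀ t ∈ Set.Ico (0 : ℝ) 1,
      ∑ j, ∫ y, fderiv ℝ C.psi y (C.e j) • fderiv ℝ h (x + t • y) (C.e j) ∂μ = 0 := by
    intro t ht
    obtain ⟨g, hg, hgd⟩ : ∃ g : E → V, ContDiff ℝ 1 g ∧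
        ∀ y, fderiv ℝ g y = fderiv ℝ h (x + t • y) := by
      by_cases h0 : t = 0
      · refine ⟨fderiv ℝ h x, (fderiv ℝ h x).contDiff, fun y => ?_⟩
        simp [h0]
      · refine ⟨fun y => t⁻¹ • h (x + t • y), ?_, fun y => ?_⟩
        · exact (hh.comp (contDiff_const.add (contDiff_id.const_smul t))).const_smul _
        · have h1 : HasFDerivAt (fun y : E => x + t • y) (t • ContinuousLinearMap.id ℝ E) y :=
            ((hasFDerivAt_id y).const_smul t).const_add x
          have h2 := (((hh.differentiable (by simp) (x + t • y)).hasFDerivAt).comp y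
            h1).const_smul t⁻¹
          rw [show (fun y => t⁻¹ • h (x + t • y)) = t⁻¹ • (h ∘ fun y => x + t • y) from rfl,
            h2.fderiv]
          ext z
          simp [smul_smul, h0]
    have := C.pair_zero μ hg (fun y hy => ?_)
    · simpa only [hgd] using this
    · simp only [hgd]
      apply hs
      rw [mem_closedBall, dist_eq_norm, add_sub_cancel_left, norm_smul, Real.norm_eq_abs,
        abs_of_nonneg ht.1]
      nlinarith [ht.2, ht.1, norm_nonneg y]
  have hd := fun t => C.mv_deriv μ hh x t
  have := constant_of_has_deriv_right_zero (a := 0) (b := 1)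
    (f := fun t : ℝ => ∫ y, C.phi y • h (x + t • y) ∂μ)
    (fun t _ => (hd t).continuousAt.continuousWithinAt)
    (fun t ht => by
      have := hd t
      rw [hz t ht] at this
      exact this.hasDerivWithinAt) 1 (by simp)
  simp only [one_smul, zero_smul, add_zero] at this
  rw [this, integral_smul_const]

end Meas

variable [FiniteDimensional ℝ V]

/-- Smoothness and gradient bound at unit scale. -/
lemma unit_scale : ∃ K : ℝ, 0 < K ∧ ∀ h : E → V, ContDiffOn ℝ 1 h (ball 0 3) →
    (∀ y ∈ ball (0 : E) 3, ∑ k, C.L k (fderiv ℝ h y (C.e k)) = 0) →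
    ContDiffAt ℝ (⊤ : ℕ∞) h 0 ∧ ∀ M : ℝ, (∀ y ∈ ball (0 : E) 3, ‖h y‖ ≤ M) →
      ‖fderiv ℝ h 0‖ ≤ K * M := by
  have hcomp := FiniteDimensional.complete ℝ V
  have hprop := FiniteDimensional.proper_real E
  let _ : MeasurableSpace E := borel E
  have : BorelSpace E := ⟨rfl⟩
  let μ : Measure E := Measure.addHaar
  set N := ∫ y, C.phi y ∂μ with hN
  have hNpos : 0 < N := C.phi_int_pos μ
  set J := ∫ y, ‖fderiv ℝ C.phi y‖ ∂μ with hJ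
  have hJ0 : 0 ≤ J := integral_nonneg fun y => norm_nonneg _
  refine ⟨N⁻¹ * J + 1, by positivity, fun h hh hs => ?_⟩
  -- cutoff
  let χ : ContDiffBump (0 : E) := ⟨5 / 2, 14 / 5, by norm_num, by norm_num⟩
  set g : E → V := fun y => χ y • h y with hg
  have hgsm : ContDiff ℝ 1 g := by
    rw [contDiff_iff_contDiffAt]
    intro y
    by_cases hy : y ∈ ball (0 : E) 3
    · exact χ.contDiff.contDiffAt.smul (hh.contDiffAt (isOpen_ball.mem_nhds hy))
    · have : g =ᶠ[𝓝 y] fun _ => 0 := by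
        have : (closedBall (0 : E) (14 / 5))ᶜ ∈ 𝓝 y := by
          refine isClosed_closedBall.isOpen_compl.mem_nhds ?_
          intro h'
          simp only [mem_ball, mem_closedBall] at hy h'
          linarith
        filter_upwards [this] with z hz
        have : χ z = 0 := χ.zero_of_le_dist (by
          simp only [Set.mem_compl_iff, mem_closedBall, not_le] at hz
          exact hz.le)
        simp [hg, this]
      exact contDiffAt_const.congr_of_eventuallyEq this
  have hgeq : ∀ y ∈ ball (0 : E) (5 / 2), g =ᶠ[𝓝 y] h := by
    intro y hy
    filter_upwards [isOpen_ball.mem_nhds hy] with z hz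
    have : χ z = 1 := χ.one_of_mem_closedBall (ball_subset_closedBall hz)
    simp [hg, this]
  have hgs : ∀ y ∈ ball (0 : E) (5 / 2), ∑ k, C.L k (fderiv ℝ g y (C.e k)) = 0 := by
    intro y hy
    rw [(hgeq y hy).fderiv_eq]
    exact hs y (ball_subset_ball (by norm_num) hy)
  set Lm : ℝ →L[ℝ] V →L[ℝ] V := ContinuousLinearMap.lsmul ℝ ℝ with hLm
  have hloc : LocallyIntegrable g μ := hgsm.continuous.locallyIntegrable
  have hconv : ∀ x ∈ ball (0 : E) 1, h x = N⁻¹ • (MeasureTheory.convolution C.phi g Lm μ) x := by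
    intro x hx
    have h1 := C.mean_value μ hgsm x (fun y hy => hgs y (by
      simp only [mem_ball, mem_closedBall] at *
      have := dist_triangle y x 0
      linarith))
    have h2 : MeasureTheory.convolution C.phi g Lm μ x = ∫ y, C.phi y • g (x + y) ∂μ := by
      rw [MeasureTheory.convolution, ← integral_neg_eq_self]
      simp [hLm, C.phi_neg]
    rw [h2, h1, smul_smul, inv_mul_cancel₀ hNpos.ne', one_smul]
    exact (hgeq x (ball_subset_ball (by norm_num) hx)).eq_of_nhds.symm
  have hev : h =ᶠ[𝓝 0] fun x => N⁻¹ • (MeasureTheory.convolution C.phi g Lm μ) x := by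
    filter_upwards [ball_mem_nhds (0 : E) one_pos] with x hx using hconv x hx
  constructor
  · have : ContDiff ℝ (⊤ : ℕ∞) (MeasureTheory.convolution C.phi g Lm μ) :=
      C.phi_supp.contDiff_convolution_left Lm C.phi_contDiff hloc
    exact ((this.const_smul N⁻¹).contDiffAt).congr_of_eventuallyEq hev
  · intro M hM
    have hM0 : 0 ≤ M := (norm_nonneg _).trans (hM 0 (by simp))
    have hd := C.phi_supp.hasFDerivAt_convolution_left Lm (C.phi_contDiff (n := 1)) hloc 0
    have hd2 : HasFDerivAt h (N⁻¹ • (MeasureTheory.convolution (fderiv ℝ C.phi) g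
        (Lm.precompL E) μ) 0) 0 := (hd.const_smul N⁻¹).congr_of_eventuallyEq hev
    rw [hd2.fderiv, norm_smul, Real.norm_of_nonneg (by positivity)]
    have hb : ‖(MeasureTheory.convolution (fderiv ℝ C.phi) g (Lm.precompL E) μ) 0‖ ≤ J * M := by
      rw [MeasureTheory.convolution, hJ, ← integral_mul_const]
      have hfi : Integrable (fun y => ‖fderiv ℝ C.phi y‖) μ := by
        refine Continuous.integrable_of_hasCompactSupport ?_ ?_
        · exact ((C.phi_contDiff (n := 1)).continuous_fderiv (by simp)).norm
        · exact (C.phi_supp.fderiv (𝕜 := ℝ)).norm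
      refine norm_integral_le_of_norm_le (hfi.mul_const M) (Eventually.of_forall fun y => ?_)
      have hop : ‖((Lm.precompL E) (fderiv ℝ C.phi y)) (g (0 - y))‖ ≤
          ‖fderiv ℝ C.phi y‖ * ‖g (0 - y)‖ := by
        refine ContinuousLinearMap.opNorm_le_bound _ (by positivity) fun z => ?_
        rw [ContinuousLinearMap.precompL_apply, hLm, ContinuousLinearMap.lsmul_apply, norm_smul]
        have := (fderiv ℝ C.phi y).le_opNorm z
        nlinarith [norm_nonneg (g (0 - y))]
      refine hop.trans ?_
      by_cases hy : ‖y‖ ≤ 1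
      · have hgy : g (0 - y) = h (0 - y) := by
          refine (hgeq _ ?_).eq_of_nhds
          simp; linarith
        have : ‖h (0 - y)‖ ≤ M := hM _ (by simp; linarith)
        rw [hgy]
        exact mul_le_mul_of_nonneg_left this (norm_nonneg _)
      · have : fderiv ℝ C.phi y = 0 := by
          have : C.phi =ᶠ[𝓝 y] fun _ => 0 := by
            have : (closedBall (0 : E) 1)ᶜ ∈ 𝓝 y :=
              isClosed_closedBall.isOpen_compl.mem_nhds (by simpa using hy)
            filter_upwards [this] with z hz
            exact C.phi_zero (by simpa using hz)
          rw [this.fderiv_eq]; simp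
        simp [this]
    have : N⁻¹ * ‖(MeasureTheory.convolution (fderiv ℝ C.phi) g (Lm.precompL E) μ) 0‖ ≤
        N⁻¹ * (J * M) := mul_le_mul_of_nonneg_left hb (by positivity)
    nlinarith

/-- `h` is a `C¹` solution of the Cauchy-Riemann type system on `U`. -/
def Sol (h : E → V) (U : Set E) : Prop :=
  ContDiffOn ℝ 1 h U ∧ ∀ y ∈ U, ∑ k, C.L k (fderiv ℝ h y (C.e k)) = 0

/-- Directional derivative as an operator on functions. -/
noncomputable def dv (v : E) (h : E → V) : E → V := fun x => fderiv ℝ h x v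

variable {C} in
lemma Sol.mono {h : E → V} {U W : Set E} (hs : C.Sol h U) (hW : W ⊆ U) : C.Sol h W :=
  ⟨hs.1.mono hW, fun y hy => hs.2 y (hW hy)⟩

lemma scale : ∃ K : ℝ, 0 < K ∧ ∀ (h : E → V) (x : E) (R : ℝ), 0 < R → C.Sol h (ball x R) →
    ContDiffAt ℝ (⊤ : ℕ∞) h x ∧ ∀ M : ℝ, (∀ y ∈ ball x R, ‖h y‖ ≤ M) →
      ‖fderiv ℝ h x‖ ≤ K / R * M := by
  obtain ⟨K, hK, H⟩ := C.unit_scale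
  refine ⟨3 * K, by positivity, fun h x R hR hs => ?_⟩
  set a := R / 3 with ha
  have ha0 : 0 < a := by positivity
  set g : E → V := fun y => h (x + a • y) with hg
  have hmem : ∀ y ∈ ball (0 : E) 3, x + a • y ∈ ball x R := by
    intro y hy
    rw [mem_ball, dist_eq_norm, add_sub_cancel_left, norm_smul, Real.norm_of_nonneg ha0.le]
    rw [mem_ball_zero_iff] at hy
    calc a * ‖y‖ < a * 3 := by gcongr
      _ = R := by rw [ha]; ring
  have hdiff : ∀ y ∈ ball (0 : E) 3, fderiv ℝ g y = a • fderiv ℝ h (x + a • y) := by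
    intro y hy
    have h1 : HasFDerivAt (fun y : E => x + a • y) (a • ContinuousLinearMap.id ℝ E) y :=
      ((hasFDerivAt_id y).const_smul a).const_add x
    have h2 : HasFDerivAt h (fderiv ℝ h (x + a • y)) (x + a • y) :=
      ((hs.1.contDiffAt (isOpen_ball.mem_nhds (hmem y hy))).differentiableAt
        (by simp)).hasFDerivAt
    have h3 := (h2.comp y h1).fderiv
    rw [show g = h ∘ fun y => x + a • y from rfl, h3]
    ext z
    simp
  obtain ⟨h1, h2⟩ := H g (hs.1.comp (contDiff_const.add (contDiff_id.const_smul a)).contDiffOn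
    hmem) (fun y hy => by
      simp only [hdiff y hy, smul_apply, map_smul, ← Finset.smul_sum, hs.2 _ (hmem y hy),
        smul_zero])
  constructor
  · have e : h = g ∘ fun z => a⁻¹ • (z - x) := by
      funext z
      simp [hg, smul_smul, ha0.ne']
    rw [e]
    refine ContDiffAt.comp x ?_ ((contDiff_id.sub contDiff_const).const_smul _).contDiffAt
    simpa using h1
  · intro M hM
    have h3 := h2 M fun y hy => hM _ (hmem y hy)
    rw [hdiff 0 (by simp), norm_smul, Real.norm_of_nonneg ha0.le] at h3
    simp only [smul_zero, add_zero] at h3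
    rw [div_mul_eq_mul_div, le_div_iff₀ hR]
    rw [ha] at h3
    linarith

variable {C} in
lemma Sol.smooth {h : E → V} {U : Set E} (hU : IsOpen U) (hs : C.Sol h U) {x : E} (hx : x ∈ U) :
    ContDiffAt ℝ (⊤ : ℕ∞) h x := by
  obtain ⟨R, hR, hb⟩ := Metric.isOpen_iff.1 hU x hx
  obtain ⟨K, hK, H⟩ := C.scale
  exact (H h x R hR (hs.mono hb)).1

variable {C} in
lemma Sol.dv {h : E → V} {U : Set E} (hU : IsOpen U) (hs : C.Sol h U) (v : E) :
    C.Sol (dv v h) U := by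
  have hd : ∀ x ∈ U, ContDiffAt ℝ 1 (fderiv ℝ h) x := fun x hx =>
    (hs.smooth hU hx).fderiv_right (m := 1) (by norm_num; exact WithTop.coe_le_coe.2 (le_top : (2 : ℕ∞) ≤ ⊤))
  refine ⟨fun x hx => ((hd x hx).clm_apply contDiffAt_const).contDiffWithinAt, fun x hx => ?_⟩
  have hdd : DifferentiableAt ℝ (fderiv ℝ h) x := (hd x hx).differentiableAt (by simp)
  have hsym : IsSymmSndFDerivAt ℝ h x :=
    (hs.smooth hU hx).isSymmSndFDerivAt (by simp; exact WithTop.coe_le_coe.2 (le_top : (2 : ℕ∞) ≤ ⊤))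
  have e1 : ∀ a b, fderiv ℝ (fun y => fderiv ℝ h y a) x b
      = fderiv ℝ (fderiv ℝ h) x b a := by
    intro a b
    rw [fderiv_clm_apply hdd (differentiableAt_const _)]
    simp
  have hz : (fun y => ∑ k, C.L k (fderiv ℝ h y (C.e k))) =ᶠ[𝓝 x] fun _ => 0 := by
    filter_upwards [hU.mem_nhds hx] with y hy using hs.2 y hy
  have hF : HasFDerivAt (fun y => ∑ k, C.L k (fderiv ℝ h y (C.e k)))
      (∑ k, (C.L k).comp (fderiv ℝ (fun y => fderiv ℝ h y (C.e k)) x)) x := by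
    refine HasFDerivAt.fun_sum fun k _ => ?_
    exact (C.L k).hasFDerivAt.comp x
      (hdd.clm_apply (differentiableAt_const (C.e k))).hasFDerivAt
  have h0 := hF.fderiv
  rw [hz.fderiv_eq] at h0
  have h1 := congrArg (fun T : E →L[ℝ] V => T v) h0
  simp only [fderiv_fun_const, Pi.zero_apply, zero_apply,
    sum_apply, ContinuousLinearMap.comp_apply] at h1
  rw [h1]
  refine Finset.sum_congr rfl fun k _ => ?_
  unfold CliffData.dv
  rw [e1, e1, hsym.eq]

variable {C} in
lemma Sol.iter {h : E → V} {U : Set E} (hU : IsOpen U) (hs : C.Sol h U) (v : E) (k : ℕ) :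
    C.Sol ((CliffData.dv v)^[k] h) U := by
  induction k with
  | zero => exact hs
  | succ k ih => rw [Function.iterate_succ_apply']; exact ih.dv hU v

/-- Taylor-type estimate with vanishing initial data. -/
lemma taylor_bound (K : ℕ) : ∀ (g : ℕ → ℝ → V) (M : ℝ),
    (∀ k, ∀ t ∈ Set.Icc (0 : ℝ) 1, HasDerivAt (g k) (g (k + 1) t) t) → (∀ k, g k 0 = 0) →
    (∀ t ∈ Set.Icc (0 : ℝ) 1, ‖g K t‖ ≤ M) → ∀ t ∈ Set.Icc (0 : ℝ) 1,
      ‖g 0 t‖ ≤ M * t ^ K / K.factorial := by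
  induction K with
  | zero => intro g M _ _ h3 t ht; simpa using h3 t ht
  | succ K ih =>
    intro g M h1 h2 h3
    have h4 := ih (fun k => g (k + 1)) M (fun k => h1 (k + 1)) (fun k => h2 (k + 1)) h3
    refine image_norm_le_of_norm_deriv_right_le_deriv_boundary (f := g 0) (f' := g 1)
      (B := fun t => M * t ^ (K + 1) / (K + 1).factorial)
      (B' := fun t => M * t ^ K / K.factorial)
      (fun t ht => (h1 0 t ht).continuousAt.continuousWithinAt)
      (fun t ht => (h1 0 t ⟨ht.1, ht.2.le⟩).hasDerivWithinAt) ?_ ?_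
      (fun t ht => h4 t ⟨ht.1, ht.2.le⟩)
    · simp [h2 0]
    · intro t
      have := (((hasDerivAt_pow (K + 1) t).const_mul M).div_const ((K + 1).factorial : ℝ))
      have e : M * t ^ K / K.factorial =
          M * (((K + 1 : ℕ) : ℝ) * t ^ (K + 1 - 1)) / ((K + 1).factorial : ℝ) := by
        rw [Nat.factorial_succ, Nat.add_sub_cancel]
        have : (K.factorial : ℝ) ≠ 0 := by positivity
        push_cast
        field_simp
      rw [e]
      exact this

/-- A solution that is flat at the centre of a ball vanishes on a proportional ball. -/
lemma vanish : ∃ c : ℝ, 0 < c ∧ ∀ (h : E → V) (z : E) (R M : ℝ), 0 < R → C.Sol h (ball z R) →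
    (∀ y ∈ ball z R, ‖h y‖ ≤ M) → (∀ v k, (CliffData.dv v)^[k] h z = 0) →
    ∀ y ∈ ball z (c * R), h y = 0 := by
  obtain ⟨K, hK, H⟩ := C.scale
  set c := min (1 / 2) (1 / (2 * K * Real.exp 1)) with hc
  have hc0 : 0 < c := by positivity
  refine ⟨c, hc0, fun h z R M hR hs hM hflat y hy => ?_⟩
  have hM0 : 0 ≤ M := (norm_nonneg _).trans (hM z (by simpa using hR))
  have hiter : ∀ (v : E) (ε : ℝ), 0 < ε → ∀ j : ℕ, ∀ y ∈ ball z (R - j * ε),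
      ‖(CliffData.dv v)^[j] h y‖ ≤ M * (K * ‖v‖ / ε) ^ j := by
    intro v ε hε j
    induction j with
    | zero => intro y hy; simpa using hM y (by simpa using hy)
    | succ j ih =>
      intro y hy
      rw [Function.iterate_succ_apply']
      have hsub : ball y ε ⊆ ball z (R - j * ε) := by
        apply ball_subset_ball'
        rw [mem_ball] at hy
        push_cast at hy
        linarith
      have hsub2 : ball y ε ⊆ ball z R :=
        hsub.trans (ball_subset_ball (by nlinarith [show (0 : ℝ) ≤ j from Nat.cast_nonneg j]))
      have h1 := (H _ y ε hε ((hs.iter isOpen_ball v j).mono hsub2)).2 _ (fun w hw => ih w (hsub hw))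
      have h2 := (fderiv ℝ ((CliffData.dv v)^[j] h) y).le_opNorm v
      calc ‖CliffData.dv v ((CliffData.dv v)^[j] h) y‖
          ≤ ‖fderiv ℝ ((CliffData.dv v)^[j] h) y‖ * ‖v‖ := h2
        _ ≤ (K / ε * (M * (K * ‖v‖ / ε) ^ j)) * ‖v‖ := by gcongr
        _ = M * (K * ‖v‖ / ε) ^ (j + 1) := by ring
  set v := y - z with hv
  have hvn : ‖v‖ < c * R := by rw [mem_ball, dist_eq_norm] at hy; exact hy
  have hvR : ‖v‖ < R / 2 := by
    have : c ≤ 1 / 2 := min_le_left _ _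
    nlinarith
  set ρ := 2 * K * ‖v‖ / R * Real.exp 1 with hρ
  have hρ0 : 0 ≤ ρ := by positivity
  have hρ1 : ρ < 1 := by
    have h1 : c ≤ 1 / (2 * K * Real.exp 1) := min_le_right _ _
    have h2 : ‖v‖ < 1 / (2 * K * Real.exp 1) * R := lt_of_lt_of_le hvn (by gcongr)
    rw [div_mul_eq_mul_div, lt_div_iff₀ (by positivity)] at h2
    rw [hρ, div_mul_eq_mul_div, div_lt_one hR]
    linarith
  have hbound : ∀ n : ℕ, ‖h y‖ ≤ M * ρ ^ (n + 1) := by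
    intro n
    set N := n + 1 with hN
    have hNpos : (0 : ℝ) < N := by rw [hN]; positivity
    have hin : ∀ t ∈ Set.Icc (0 : ℝ) 1, z + t • v ∈ ball z (R / 2) := by
      intro t ht
      rw [mem_ball, dist_eq_norm, add_sub_cancel_left, norm_smul, Real.norm_of_nonneg ht.1]
      nlinarith [ht.1, ht.2, norm_nonneg v]
    have hin2 : ∀ t ∈ Set.Icc (0 : ℝ) 1, z + t • v ∈ ball z R := fun t ht =>
      ball_subset_ball (by linarith) (hin t ht)
    have hT := taylor_bound (V := V) N (fun k t => (CliffData.dv v)^[k] h (z + t • v))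
      (M * (K * ‖v‖ / (R / (2 * N))) ^ N)
      (fun k t ht => by
        have h1 : HasDerivAt (fun s : ℝ => z + s • v) v t := by
          simpa using ((hasDerivAt_id t).smul_const v).const_add z
        have h2 : DifferentiableAt ℝ ((CliffData.dv v)^[k] h) (z + t • v) :=
          ((hs.iter isOpen_ball v k).1.contDiffAt
            (isOpen_ball.mem_nhds (hin2 t ht))).differentiableAt (by simp)
        have h3 := h2.hasFDerivAt.comp_hasDerivAt t h1
        simp only [Function.iterate_succ_apply']
        exact h3)
      (fun k => by simpa using hflat v k)
      (fun t ht => hiter v (R / (2 * N)) (by positivity) N _ (by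
        have : R - N * (R / (2 * N)) = R / 2 := by field_simp; ring
        rw [this]; exact hin t ht)) 1 (by simp)
    simp only [Function.iterate_zero, id_eq, one_smul, one_pow, mul_one] at hT
    rw [show z + v = y by rw [hv]; abel] at hT
    refine hT.trans ?_
    have e1 : (N : ℝ) ^ N / N.factorial ≤ Real.exp 1 ^ N := by
      rw [← Real.exp_nat_mul, mul_one]
      exact Real.pow_div_factorial_le_exp (x := (N : ℝ)) hNpos.le N
    calc M * (K * ‖v‖ / (R / (2 * N))) ^ N / N.factorial
        = M * (2 * K * ‖v‖ / R) ^ N * ((N : ℝ) ^ N / N.factorial) := by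
          have : K * ‖v‖ / (R / (2 * N)) = 2 * K * ‖v‖ / R * N := by field_simp
          rw [this, mul_pow]; ring
      _ ≤ M * (2 * K * ‖v‖ / R) ^ N * Real.exp 1 ^ N := by gcongr
      _ = M * ρ ^ N := by rw [hρ, mul_pow]; ring
  have hlim : Tendsto (fun n : ℕ => M * ρ ^ (n + 1)) atTop (𝓝 (M * 0)) :=
    ((tendsto_pow_atTop_nhds_zero_of_lt_one hρ0 hρ1).comp (tendsto_add_atTop_nat 1)).const_mul M
  rw [mul_zero] at hlim
  exact norm_le_zero_iff.1 (ge_of_tendsto' hlim hbound)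

/-- Flatness of a solution at a point forces vanishing nearby. -/
lemma eventually_zero {h : E → V} {U : Set E} (hU : IsOpen U) (hs : C.Sol h U) {z : E}
    (hz : z ∈ U) (hflat : ∀ v k, (CliffData.dv v)^[k] h z = 0) : ∀ᶠ y in 𝓝 z, h y = 0 := by
  have hprop := FiniteDimensional.proper_real E
  obtain ⟨c, hc, H⟩ := C.vanish
  obtain ⟨R, hR, hb⟩ := Metric.nhds_basis_closedBall.mem_iff.1 (hU.mem_nhds hz)
  obtain ⟨M, hM⟩ := (isCompact_closedBall z R).exists_bound_of_continuousOn
    (hs.1.continuousOn.mono hb)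
  have := H h z R M hR (hs.mono (ball_subset_closedBall.trans hb))
    (fun y hy => hM y (ball_subset_closedBall hy)) hflat
  filter_upwards [ball_mem_nhds z (mul_pos hc hR)] with y hy using this y hy

lemma flat_of_eventually {h : E → V} {z : E} (hz : ∀ᶠ y in 𝓝 z, h y = 0) (v : E) (k : ℕ) :
    (CliffData.dv v)^[k] h z = 0 := by
  have : ∀ᶠ y in 𝓝 z, (CliffData.dv v)^[k] h y = 0 := by
    induction k with
    | zero => exact hz
    | succ k ih =>
      filter_upwards [ih.eventually_nhds] with y hy
      rw [Function.iterate_succ_apply']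
      have : (CliffData.dv v)^[k] h =ᶠ[𝓝 y] fun _ => 0 := hy
      simp [CliffData.dv, this.fderiv_eq]
  exact this.self_of_nhds

/-- Identity theorem. -/
lemma identity {h : E → V} {U : Set E} (hU : IsOpen U) (hpre : IsPreconnected U)
    (hs : C.Sol h U) {z : E} (hz : z ∈ U) (hflat : ∀ v k, (CliffData.dv v)^[k] h z = 0) :
    ∀ y ∈ U, h y = 0 := by
  have hprop := FiniteDimensional.proper_real E
  set Z : Set E := {x | ∀ᶠ y in 𝓝 x, h y = 0} with hZ
  have hZo : IsOpen Z := by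
    rw [isOpen_iff_mem_nhds]
    intro x hx
    exact Filter.Eventually.eventually_nhds hx
  have hsub : U ⊆ Z := by
    refine hpre.subset_of_closure_inter_subset hZo
      ⟨z, hz, C.eventually_zero hU hs hz hflat⟩ ?_
    rintro x ⟨hxc, hxU⟩
    obtain ⟨c, hc, H⟩ := C.vanish
    obtain ⟨R, hR, hb⟩ := Metric.nhds_basis_closedBall.mem_iff.1 (hU.mem_nhds hxU)
    obtain ⟨M, hM⟩ := (isCompact_closedBall x R).exists_bound_of_continuousOn
      (hs.1.continuousOn.mono hb)
    obtain ⟨w, hwZ, hw⟩ := Metric.mem_closure_iff.1 hxc (min (R / 2) (c * (R / 2)))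
      (by positivity)
    have hwR : dist x w < R / 2 := hw.trans_le (min_le_left _ _)
    have hsb : ball w (R / 2) ⊆ closedBall x R := by
      refine (ball_subset_ball' ?_).trans ball_subset_closedBall
      rw [dist_comm]; linarith
    have := H h w (R / 2) M (by positivity) (hs.mono (hsb.trans hb))
      (fun y hy => hM y (hsb hy)) (flat_of_eventually hwZ)
    have hxb : x ∈ ball w (c * (R / 2)) := hw.trans_le (min_le_right _ _)
    filter_upwards [isOpen_ball.mem_nhds hxb] with y hy using this y hy
  exact fun y hy => (hsub hy).self_of_nhds

/-- Identity theorem with data on a hyperplane `c i₀ = 0`. -/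
lemma identity_hyperplane {h : E → V} {U : Set E} (hU : IsOpen U) (hpre : IsPreconnected U)
    (hs : C.Sol h U) (i₀ : ι) {z : E} (hz : z ∈ U) (hz0 : C.c i₀ z = 0)
    (h0 : ∀ y ∈ U, C.c i₀ y = 0 → h y = 0) : ∀ y ∈ U, h y = 0 := by
  refine C.identity hU hpre hs hz fun v k => ?_
  have hk : ∀ k, ∀ y ∈ U, C.c i₀ y = 0 → (CliffData.dv v)^[k] h y = 0 := by
    intro k
    induction k with
    | zero => exact h0
    | succ k ih =>
      intro y hy hy0
      rw [Function.iterate_succ_apply']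
      have hsk := hs.iter hU v k
      set g := (CliffData.dv v)^[k] h with hg
      have hgd : HasFDerivAt g (fderiv ℝ g y) y :=
        ((hsk.1.contDiffAt (hU.mem_nhds hy)).differentiableAt (by simp)).hasFDerivAt
      have htan : ∀ i, i ≠ i₀ → fderiv ℝ g y (C.e i) = 0 := by
        intro i hi
        have h1 : HasDerivAt (fun s : ℝ => y + s • C.e i) (C.e i) 0 := by
          simpa using ((hasDerivAt_id (0 : ℝ)).smul_const (C.e i)).const_add y
        have h2 : HasDerivAt (fun s : ℝ => g (y + s • C.e i)) (fderiv ℝ g y (C.e i)) 0 := by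
          refine HasFDerivAt.comp_hasDerivAt (0 : ℝ) ?_ h1
          simpa using hgd
        have h3 : (fun s : ℝ => g (y + s • C.e i)) =ᶠ[𝓝 0] fun _ => 0 := by
          have : ∀ᶠ s : ℝ in 𝓝 0, y + s • C.e i ∈ U := by
            refine h1.continuousAt.preimage_mem_nhds ?_
            simpa using hU.mem_nhds hy
          filter_upwards [this] with s hs'
          apply ih _ hs'
          rw [map_add, map_smul, hy0, C.dual, if_neg (Ne.symm hi)]
          simp
        have h4 := h2.deriv
        rw [h3.deriv_eq] at h4
        simpa using h4.symm
      have hnor : fderiv ℝ g y (C.e i₀) = 0 := by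
        have h1 := hsk.2 y hy
        rw [Finset.sum_eq_single i₀ (fun i _ hi => by rw [htan i hi, map_zero]) (by simp)] at h1
        have h2 := C.cliff i₀ i₀ (fderiv ℝ g y (C.e i₀))
        rw [h1] at h2
        simp only [map_zero, add_zero, if_true] at h2
        exact (smul_eq_zero.1 h2.symm).resolve_left (by norm_num)
      unfold CliffData.dv
      rw [← C.expand v, map_sum]
      refine Finset.sum_eq_zero fun i _ => ?_
      rw [map_smul]
      by_cases hi : i = i₀
      · rw [hi, hnor, smul_zero]
      · rw [htan i hi, smul_zero]
  exact hk k z hz hz0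

end CliffData
end Analysis

section Algebra

variable {conj : A → A}

namespace IsAltStarAlg

lemma zero_mulA (H : IsAltStarAlg A conj) (a : A) : (0 : A) * a = 0 := by
  have := H.smul_mul' 0 0 a
  simpa using this

lemma mul_zeroA (H : IsAltStarAlg A conj) (a : A) : a * (0 : A) = 0 := by
  have := H.mul_smul' 0 a 0
  simpa using this

lemma neg_mulA (H : IsAltStarAlg A conj) (a b : A) : (-a) * b = -(a * b) := by
  have := H.smul_mul' (-1) a b
  simpa using this

lemma mul_negA (H : IsAltStarAlg A conj) (a b : A) : a * (-b) = -(a * b) := by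
  have := H.mul_smul' (-1) a b
  simpa using this

lemma sub_mulA (H : IsAltStarAlg A conj) (a b c : A) : (a - b) * c = a * c - b * c := by
  rw [sub_eq_add_neg, H.add_mul', H.neg_mulA, sub_eq_add_neg]

lemma mul_subA (H : IsAltStarAlg A conj) (a b c : A) : a * (b - c) = a * b - a * c := by
  rw [sub_eq_add_neg, H.mul_add', H.mul_negA, sub_eq_add_neg]

lemma alt_lin (H : IsAltStarAlg A conj) (a b c : A) : a * (b * c) + b * (a * c) = (a * b + b * a) * c := by
  have h := H.alt_left (a + b) c
  simp only [H.add_mul', H.mul_add'] at h ⊢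
  have h1 := H.alt_left a c
  have h2 := H.alt_left b c
  rw [h1, h2] at h
  have : a * a * c + (a * (b * c) + b * (a * c)) + b * b * c =
      a * a * c + (a * b * c + b * a * c) + b * b * c := by
    calc _ = a * a * c + a * (b * c) + (b * (a * c) + b * b * c) := by abel
      _ = _ := h
      _ = _ := by abel
  simpa using this

lemma one_neA (H : IsAltStarAlg A conj) : (1 : A) ≠ 0 := by
  intro h
  have hs : Subsingleton A := ⟨fun a b => by
    rw [← H.one_mul' a, ← H.one_mul' b, h, H.zero_mulA, H.zero_mulA]⟩
  have := H.one_lt_finrank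
  rw [Module.finrank_zero_of_subsingleton] at this
  omega

lemma mul_sumA (H : IsAltStarAlg A conj) {κ : Type*} (s : Finset κ) (a : A) (f : κ → A) :
    a * ∑ i ∈ s, f i = ∑ i ∈ s, a * f i := by
  classical
  induction s using Finset.induction_on with
  | empty => simp [H.mul_zeroA]
  | insert i s hi ih => rw [Finset.sum_insert hi, Finset.sum_insert hi, H.mul_add', ih]

lemma sum_mulA (H : IsAltStarAlg A conj) {κ : Type*} (s : Finset κ) (a : A) (f : κ → A) :
    (∑ i ∈ s, f i) * a = ∑ i ∈ s, f i * a := by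
  classical
  induction s using Finset.induction_on with
  | empty => simp [H.zero_mulA]
  | insert i s hi ih => rw [Finset.sum_insert hi, Finset.sum_insert hi, H.add_mul', ih]

end IsAltStarAlg

/-- Left multiplication as a linear map. -/
def lmulLin (H : IsAltStarAlg A conj) (a : A) : A →ₗ[ℝ] A where
  toFun b := a * b
  map_add' := H.mul_add' a
  map_smul' r b := H.mul_smul' r a b

/-- Left multiplication as a continuous linear map. -/
noncomputable def lmul (H : IsAltStarAlg A conj) (a : A) : A →L[ℝ] A :=
  haveI := H.finDim
  LinearMap.toContinuousLinearMap (lmulLin H a)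

lemma lmul_apply (H : IsAltStarAlg A conj) (a b : A) : lmul H a b = a * b := rfl

variable {v : ℕ → A} {m p : ℕ}

lemma v_sq (H : IsAltStarAlg A conj) (hv : IsHypBasis A conj v m) {s : ℕ} (h1 : 1 ≤ s) (h2 : s ≤ m) :
    v s * v s = -1 := by
  have h3 := hv.trace_zero s h1 h2
  have h4 := hv.norm_one s h1 h2
  rw [add_comm] at h3
  rw [eq_neg_of_add_eq_zero_left h3, H.mul_negA] at h4
  rw [← h4, neg_neg]

lemma v_emb (H : IsAltStarAlg A conj) (hv : IsHypBasis A conj v m) {w : Fin (m + 1) → ℝ}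
    (hw : ∀ s : Fin (m + 1), (s : ℕ) ≤ p → w s = 0) {s : ℕ} (h1 : 1 ≤ s) (h2 : s ≤ p)
    (hp : p < m) : v s * emb v m w + emb v m w * v s = 0 := by
  unfold emb
  rw [H.mul_sumA, H.sum_mulA, ← Finset.sum_add_distrib]
  refine Finset.sum_eq_zero fun t _ => ?_
  rw [H.mul_smul', H.smul_mul', ← smul_add]
  by_cases ht : (t : ℕ) ≤ p
  · rw [hw t ht, zero_smul]
  · have := hv.anticomm s t h1 (by omega) (by omega) (by omega) (by omega)
    rw [this]; simp

lemma emb_sq (H : IsAltStarAlg A conj) (hv : IsHypBasis A conj v m) {w : Fin (m + 1) → ℝ}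
    (hw : ∀ s : Fin (m + 1), (s : ℕ) ≤ p → w s = 0) :
    emb v m w * emb v m w = -((∑ s, w s ^ 2) • (1 : A)) := by
  set B : Fin (m + 1) → Fin (m + 1) → A := fun s t => (w s * w t) • (v s * v t) with hB
  have h1 : emb v m w * emb v m w = ∑ s, ∑ t, B s t := by
    unfold emb
    rw [H.sum_mulA]
    refine Finset.sum_congr rfl fun s _ => ?_
    rw [H.mul_sumA]
    refine Finset.sum_congr rfl fun t _ => ?_
    rw [H.mul_smul', H.smul_mul', smul_smul, mul_comm]
  have h2 : ∀ s t, B s t + B t s = if s = t then -((2 * w s ^ 2) • (1 : A)) else 0 := by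
    intro s t
    simp only [hB]
    by_cases hs : (s : ℕ) ≤ p
    · rw [hw s hs]; simp
    by_cases ht : (t : ℕ) ≤ p
    · rw [hw t ht]
      have : s ≠ t := fun h => hs (h ▸ ht)
      simp [this]
    by_cases hst : s = t
    · subst hst
      rw [if_pos rfl, v_sq H hv (by omega) (by omega), ← add_smul, smul_neg]
      congr 2
      ring
    · rw [if_neg hst, hv.anticomm s t (by omega) (by omega) (by omega) (by omega)
        (fun h => hst (Fin.ext h)), mul_comm (w t)]
      simp
  have h3 : (2 : ℝ) • ∑ s, ∑ t, B s t = (2 : ℝ) • -((∑ s, w s ^ 2) • (1 : A)) := by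
    calc (2 : ℝ) • ∑ s, ∑ t, B s t = ∑ s, ∑ t, B s t + ∑ s, ∑ t, B t s := by
          rw [two_smul]; congr 1; rw [Finset.sum_comm]
      _ = ∑ s, ∑ t, (B s t + B t s) := by simp only [Finset.sum_add_distrib]
      _ = ∑ s, -((2 * w s ^ 2) • (1 : A)) := by simp [h2]
      _ = _ := by
        rw [Finset.sum_neg_distrib, ← Finset.sum_smul, ← Finset.mul_sum, smul_neg, smul_smul]
  rw [h1]
  have := congrArg (fun x => (2 : ℝ)⁻¹ • x) h3
  simpa [smul_smul] using this

lemma mem_Sph (H : IsAltStarAlg A conj) (hv : IsHypBasis A conj v m) {w : Fin (m + 1) → ℝ} :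
    w ∈ Sph v m p ↔ (∀ s : Fin (m + 1), (s : ℕ) ≤ p → w s = 0) ∧ ∑ s, w s ^ 2 = 1 := by
  constructor
  · rintro ⟨h1, h2⟩
    refine ⟨h1, ?_⟩
    rw [emb_sq H hv h1, neg_inj] at h2
    have : ((∑ s, w s ^ 2) - 1) • (1 : A) = 0 := by rw [sub_smul, h2, one_smul, sub_self]
    have := (smul_eq_zero.1 this).resolve_right H.one_neA
    linarith
  · rintro ⟨h1, h2⟩
    refine ⟨h1, ?_⟩
    rw [emb_sq H hv h1, h2, one_smul]

lemma Sph_neg (H : IsAltStarAlg A conj) (hv : IsHypBasis A conj v m) {w : Fin (m + 1) → ℝ} (hw : w ∈ Sph v m p) :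
    -w ∈ Sph v m p := by
  rw [mem_Sph H hv] at hw ⊢
  refine ⟨fun s hs => by simp [hw.1 s hs], by simpa using hw.2⟩

lemma emb_neg (w : Fin (m + 1) → ℝ) : emb v m (-w) = -emb v m w := by
  simp [emb]

lemma single_Sph (H : IsAltStarAlg A conj) (hv : IsHypBasis A conj v m) (s : Fin (m + 1)) (hs : p < s) :
    (Pi.single s 1 : Fin (m + 1) → ℝ) ∈ Sph v m p := by
  rw [mem_Sph H hv]
  constructor
  · intro t ht
    rw [Pi.single_eq_of_ne]
    rintro rfl
    omega
  · rw [Finset.sum_eq_single s]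
    · simp
    · intro t _ ht; simp [ht]
    · simp

lemma emb_emb (H : IsAltStarAlg A conj) {w : Fin (m + 1) → ℝ} (hw : w ∈ Sph v m p) (b : A) :
    emb v m w * (emb v m w * b) = -b := by
  rw [H.alt_left, hw.2, H.neg_mulA, H.one_mul']

lemma v_emb_mul (H : IsAltStarAlg A conj) (hv : IsHypBasis A conj v m) (hp : p < m) {w : Fin (m + 1) → ℝ}
    (hw : w ∈ Sph v m p) {s : ℕ} (h1 : 1 ≤ s) (h2 : s ≤ p) (b : A) :
    v s * (emb v m w * b) = -(emb v m w * (v s * b)) := by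
  have := H.alt_lin (v s) (emb v m w) b
  rw [v_emb H hv hw.1 h1 h2 hp, H.zero_mulA] at this
  exact eq_neg_of_add_eq_zero_left this

/-- `D(ω b) = ω D̄ b`. -/
lemma sum_v_emb (H : IsAltStarAlg A conj) (hv : IsHypBasis A conj v m) (hp : p < m) {w : Fin (m + 1) → ℝ}
    (hw : w ∈ Sph v m p) (b : Fin (p + 1) → A) :
    ∑ s : Fin (p + 1), v s * (emb v m w * b s) =
      emb v m w * (b 0 - ∑ s : Fin (p + 1), if 1 ≤ (s : ℕ) then v s * b s else 0) := by
  rw [Fin.sum_univ_succ, Fin.sum_univ_succ (f := fun s : Fin (p + 1) =>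
    if 1 ≤ (s : ℕ) then v s * b s else 0)]
  simp only [Fin.val_zero, Fin.val_succ, hv.v_zero, H.one_mul']
  simp only [show ¬ (1 ≤ 0) by omega, if_false, zero_add, le_add_iff_nonneg_left, zero_le, if_true]
  rw [H.mul_subA, H.mul_sumA, sub_eq_add_neg, ← Finset.sum_neg_distrib]
  congr 1
  refine Finset.sum_congr rfl fun s _ => ?_
  exact v_emb_mul H hv hp hw (by omega) (by omega) _

/-- `D̄(ω b) = ω D b`. -/
lemma sum_v_emb' (H : IsAltStarAlg A conj) (hv : IsHypBasis A conj v m) (hp : p < m) {w : Fin (m + 1) → ℝ}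
    (hw : w ∈ Sph v m p) (b : Fin (p + 1) → A) :
    emb v m w * b 0 - (∑ s : Fin (p + 1), if 1 ≤ (s : ℕ) then v s * (emb v m w * b s) else 0) =
      emb v m w * ∑ s : Fin (p + 1), v s * b s := by
  rw [Fin.sum_univ_succ, Fin.sum_univ_succ]
  simp only [Fin.val_zero, Fin.val_succ, hv.v_zero, H.one_mul']
  simp only [show ¬ (1 ≤ 0) by omega, if_false, zero_add, le_add_iff_nonneg_left, zero_le, if_true]
  rw [H.mul_add', H.mul_sumA, sub_eq_add_neg, ← Finset.sum_neg_distrib]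
  congr 1
  refine Finset.sum_congr rfl fun s _ => ?_
  rw [v_emb_mul H hv hp hw (by omega) (by omega) _, neg_neg]

end Algebra


section Geometry

variable {conj : A → A} {v : ℕ → A} {m p : ℕ}

lemma pt_apply (w : Fin (m + 1) → ℝ) (hw : ∀ s : Fin (m + 1), (s : ℕ) ≤ p → w s = 0)
    (y : Fin (p + 1) → ℝ) (r : ℝ) (s : Fin (m + 1)) :
    pt m p w y r s = if h : (s : ℕ) < p + 1 then y ⟨s, h⟩ else r * w s := by
  unfold pt injP
  by_cases h : (s : ℕ) < p + 1
  · simp only [Pi.add_apply, Pi.smul_apply, dif_pos h, hw s (by omega), smul_zero, add_zero]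
  · simp only [Pi.add_apply, Pi.smul_apply, dif_neg h, zero_add, smul_eq_mul]

lemma projP_pt (hp : p < m) (w : Fin (m + 1) → ℝ)
    (hw : ∀ s : Fin (m + 1), (s : ℕ) ≤ p → w s = 0)
    (y : Fin (p + 1) → ℝ) (r : ℝ) : projP m p (pt m p w y r) = y := by
  funext s
  have h : (s : ℕ) < m + 1 := by omega
  simp only [projP, h, dif_pos, pt_apply w hw, s.2]

lemma xqpart_pt (w : Fin (m + 1) → ℝ)
    (hw : ∀ s : Fin (m + 1), (s : ℕ) ≤ p → w s = 0)
    (y : Fin (p + 1) → ℝ) (r : ℝ) : xqpart m p (pt m p w y r) = r • w := by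
  funext s
  simp only [xqpart, pt_apply w hw]
  by_cases h : (s : ℕ) ≤ p
  · simp [h, hw s h]
  · simp [h, show ¬ (s : ℕ) < p + 1 by omega]

lemma rad_pt (H : IsAltStarAlg A conj) (hv : IsHypBasis A conj v m) {w : Fin (m + 1) → ℝ}
    (hw : w ∈ Sph v m p) (y : Fin (p + 1) → ℝ) (r : ℝ) :
    rad m p (pt m p w y r) = |r| := by
  rw [mem_Sph H hv] at hw
  unfold rad
  rw [xqpart_pt w hw.1]
  simp only [Pi.smul_apply, smul_eq_mul, mul_pow, ← Finset.mul_sum, hw.2, mul_one]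
  exact Real.sqrt_sq_eq_abs r

lemma pt_neg (w : Fin (m + 1) → ℝ) (y : Fin (p + 1) → ℝ) (r : ℝ) :
    pt m p (-w) y (-r) = pt m p w y r := by
  simp [pt]

lemma slice_eq (H : IsAltStarAlg A conj) (hv : IsHypBasis A conj v m) (hp : p < m)
    {D : Set ((Fin (p + 1) → ℝ) × ℝ)} (hDrefl : ∀ z ∈ D, reflD p z ∈ D)
    {w : Fin (m + 1) → ℝ} (hw : w ∈ Sph v m p) :
    sliceSet m p (OmegaD v m p D) w = D := by
  ext ⟨y, r⟩
  constructor
  · rintro ⟨w', hw', ⟨y', r'⟩, hz', h⟩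
    have h1 := congrArg (projP m p) h
    have h2 := congrArg (rad m p) h
    simp only [projP_pt hp w hw.1, projP_pt hp w' hw'.1] at h1
    simp only [rad_pt H hv hw, rad_pt H hv hw'] at h2
    subst h1
    rcases abs_eq_abs.1 h2 with rfl | rfl
    · exact hz'
    · exact hDrefl _ hz'
  · intro h
    exact ⟨w, hw, (y, r), h, rfl⟩

lemma DomCR_stem (H : IsAltStarAlg A conj) (hv : IsHypBasis A conj v m) (hp : p < m)
    {w : Fin (m + 1) → ℝ} (hw : w ∈ Sph v m p)
    {F₁ F₂ : (Fin (p + 1) → ℝ) × ℝ → A} {z : (Fin (p + 1) → ℝ) × ℝ}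
    (h1 : DifferentiableAt ℝ F₁ z) (h2 : DifferentiableAt ℝ F₂ z) :
    DomCR v m p w (fun z => F₁ z + emb v m w * F₂ z) z =
      (DopSx v p F₁ z - pdSr p F₂ z) + emb v m w * (DbaropSx v p F₂ z + pdSr p F₁ z) := by
  have hd : fderiv ℝ (fun z => F₁ z + emb v m w * F₂ z) z =
      fderiv ℝ F₁ z + (lmul H (emb v m w)).comp (fderiv ℝ F₂ z) :=
    (h1.hasFDerivAt.add ((lmul H (emb v m w)).hasFDerivAt.comp z h2.hasFDerivAt)).fderiv
  unfold DomCR DopSx DbaropSx pdSx pdSr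
  rw [hd]
  simp only [add_apply, ContinuousLinearMap.comp_apply, lmul_apply, H.mul_add',
    Finset.sum_add_distrib, emb_emb H hw]
  rw [sum_v_emb H hv hp hw]
  abel

lemma gsr_sub (H : IsAltStarAlg A conj) (hv : IsHypBasis A conj v m) (hp : p < m)
    {D : Set ((Fin (p + 1) → ℝ) × ℝ)} (hD : IsOpen D) (hDrefl : ∀ z ∈ D, reflD p z ∈ D)
    {f : (Fin (m + 1) → ℝ) → A} (hf : MemGSR v m p D f) : GSM v m p f (OmegaD v m p D) := by
  obtain ⟨F₁, F₂, -, hc1, hc2, hind, hcr⟩ := hf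
  intro w hw
  rw [slice_eq H hv hp hDrefl hw]
  have heq : Set.EqOn (sliceFun m p f w) (fun z => F₁ z + emb v m w * F₂ z) D :=
    fun z hz => hind w hw z hz
  constructor
  · refine ContDiffOn.congr ?_ heq
    exact hc1.add ((lmul H (emb v m w)).contDiff.comp_contDiffOn hc2)
  · intro z hz
    have hn := hD.mem_nhds hz
    have hfd : fderiv ℝ (sliceFun m p f w) z = fderiv ℝ (fun z => F₁ z + emb v m w * F₂ z) z :=
      Filter.EventuallyEq.fderiv_eq (heq.eventuallyEq_of_mem hn)
    have h1 : DifferentiableAt ℝ F₁ z := (hc1.contDiffAt hn).differentiableAt (by simp)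
    have h2 : DifferentiableAt ℝ F₂ z := (hc2.contDiffAt hn).differentiableAt (by simp)
    have := DomCR_stem H hv hp hw h1 h2
    rw [(hcr z hz).1, (hcr z hz).2, H.mul_zeroA, add_zero] at this
    rw [← this]
    unfold DomCR DopSx pdSx pdSr
    rw [hfd]

end Geometry

section Strict

variable {conj : A → A} {v : ℕ → A} {m p : ℕ}

lemma strict_dim (H : IsAltStarAlg A conj) (hv : IsHypBasis A conj v m) (hp : p < m)
    {D : Set ((Fin (p + 1) → ℝ) × ℝ)} (hDrefl : ∀ z ∈ D, reflD p z ∈ D)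
    (hdom : IsConnected (OmegaD v m p D))
    (hemp : (OmegaD v m p D ∩ {x | xqpart m p x = 0}) = ∅) : p + 2 ≤ m := by
  by_contra hm
  have hm : m = p + 1 := by omega
  obtain ⟨x, w, hw, z, hz, hx⟩ := hdom.nonempty
  have hη := single_Sph (p := p) H hv (Fin.last m) (by simpa using hp)
  set η : Fin (m + 1) → ℝ := Pi.single (Fin.last m) 1 with hηd
  have hval : ∀ r : ℝ, pt m p η z.1 r (Fin.last m) = r := by
    intro r
    rw [pt_apply η hη.1, dif_neg (by simp; omega)]
    simp [hηd]
  have m1 : pt m p η z.1 z.2 ∈ OmegaD v m p D := ⟨η, hη, z, hz, rfl⟩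
  have m2 : pt m p η z.1 (-z.2) ∈ OmegaD v m p D := ⟨η, hη, _, hDrefl z hz, rfl⟩
  have hc : IsPreconnected ((fun x : Fin (m + 1) → ℝ => x (Fin.last m)) '' OmegaD v m p D) :=
    hdom.isPreconnected.image _ (continuous_apply _).continuousOn
  have n1 : z.2 ∈ ((fun x : Fin (m + 1) → ℝ => x (Fin.last m)) '' OmegaD v m p D) :=
    ⟨_, m1, hval _⟩
  have n2 : -z.2 ∈ ((fun x : Fin (m + 1) → ℝ => x (Fin.last m)) '' OmegaD v m p D) :=
    ⟨_, m2, hval _⟩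
  have h0 : (0 : ℝ) ∈ ((fun x : Fin (m + 1) → ℝ => x (Fin.last m)) '' OmegaD v m p D) := by
    refine hc.ordConnected.uIcc_subset n1 n2 ?_
    rw [Set.mem_uIcc]
    rcases le_total 0 z.2 with h | h
    · right; constructor <;> linarith
    · left; constructor <;> linarith
  obtain ⟨x0, hx0, hx00⟩ := h0
  have : x0 ∈ (OmegaD v m p D ∩ {x | xqpart m p x = 0}) := by
    refine ⟨hx0, ?_⟩
    funext s
    simp only [xqpart, Pi.zero_apply]
    split_ifs with hs
    · rfl
    · have : s = Fin.last m := Fin.ext (by simp; omega)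
      rw [this]; exact hx00
  rw [hemp] at this
  exact this

lemma strict_part (H : IsAltStarAlg A conj) (hv : IsHypBasis A conj v m) (hp : p < m)
    {D : Set ((Fin (p + 1) → ℝ) × ℝ)} (hDrefl : ∀ z ∈ D, reflD p z ∈ D)
    (hdom : IsConnected (OmegaD v m p D))
    (hemp : (OmegaD v m p D ∩ {x | xqpart m p x = 0}) = ∅) :
    ∃ f, GSM v m p f (OmegaD v m p D) ∧ ¬ MemGSR v m p D f := by
  classical
  have hm := strict_dim H hv hp hDrefl hdom hemp
  have hω := single_Sph (p := p) H hv (Fin.last m) (by simpa using hp)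
  have hη := single_Sph (p := p) H hv (⟨p + 1, by omega⟩ : Fin (m + 1)) (by simp)
  set ω₀ : Fin (m + 1) → ℝ := Pi.single (Fin.last m) 1 with hω₀
  set η : Fin (m + 1) → ℝ := Pi.single (⟨p + 1, by omega⟩ : Fin (m + 1)) 1 with hηd
  have hne : ∀ z ∈ D, z.2 ≠ 0 := by
    intro z hz h0
    have : pt m p ω₀ z.1 z.2 ∈ (OmegaD v m p D ∩ {x | xqpart m p x = 0}) := by
      refine ⟨⟨ω₀, hω, z, hz, rfl⟩, ?_⟩
      show xqpart m p _ = 0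
      rw [xqpart_pt ω₀ hω.1, h0, zero_smul]
    rw [hemp] at this
    exact this
  let f : (Fin (m + 1) → ℝ) → A := fun x => if ∃ t : ℝ, 0 < t ∧ xqpart m p x = t • ω₀ then 1 else 0
  refine ⟨f, ?_, ?_⟩
  · intro w hw
    rw [slice_eq H hv hp hDrefl hw]
    have key : ∀ z0 ∈ D, sliceFun m p f w =ᶠ[𝓝 z0] fun _ => sliceFun m p f w z0 := by
      intro z0 hz0
      have hz0' := hne z0 hz0
      have hop : ∀ᶠ z in 𝓝 z0, 0 < z.2 * z0.2 := by
        have hcont : Continuous fun z : (Fin (p + 1) → ℝ) × ℝ => z.2 * z0.2 := by fun_prop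
        exact hcont.continuousAt.eventually_const_lt (mul_self_pos.2 hz0')
      filter_upwards [hop] with z hz
      have aux : ∀ a b : ℝ, 0 < a * b → (∃ t : ℝ, 0 < t ∧ a • w = t • ω₀) →
          ∃ t : ℝ, 0 < t ∧ b • w = t • ω₀ := by
        rintro a b hab ⟨t, ht, h⟩
        have ha : a ≠ 0 := left_ne_zero_of_mul hab.ne'
        refine ⟨a⁻¹ * b * t, ?_, ?_⟩
        · have : a⁻¹ * b = (a⁻¹) ^ 2 * (a * b) := by field_simp
          rw [this]; positivity
        · rw [mul_smul, ← h, smul_smul]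
          congr 1; field_simp
      simp only [sliceFun, f, xqpart_pt w hw.1]
      congr 1
      exact propext ⟨aux _ _ hz, aux _ _ (by rwa [mul_comm])⟩
    constructor
    · intro z0 hz0
      exact (contDiffAt_const.congr_of_eventuallyEq (key z0 hz0)).contDiffWithinAt
    · intro z0 hz0
      have : fderiv ℝ (sliceFun m p f w) z0 = 0 := by
        rw [(key z0 hz0).fderiv_eq]; simp
      unfold DomCR DopSx pdSx pdSr
      rw [this]
      simp [H.mul_zeroA]
  · rintro ⟨F₁, F₂, -, -, -, hind, -⟩
    obtain ⟨z, hz, hzpos⟩ : ∃ z ∈ D, 0 < z.2 := by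
      obtain ⟨x, w, hw, z, hz, hx⟩ := hdom.nonempty
      rcases lt_or_gt_of_ne (hne z hz) with h | h
      · exact ⟨reflD p z, hDrefl z hz, by simpa [reflD] using h⟩
      · exact ⟨z, hz, h⟩
    have hη0 : η (Fin.last m) = 0 := by
      rw [hηd, Pi.single_eq_of_ne]
      intro h; have := congrArg Fin.val h; simp at this; omega
    have e1 : ∀ w : Fin (m + 1) → ℝ, w ∈ Sph v m p → w (Fin.last m) = 0 → f (pt m p w z.1 z.2) = 0 := by
      intro w hw hw0
      simp only [f, xqpart_pt w hw.1]
      rw [if_neg]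
      rintro ⟨t, ht, h⟩
      have := congrFun h (Fin.last m)
      simp [hω₀, hw0] at this
      exact ht.ne this
    have a1 := hind η hη z hz
    have a2 := hind (-η) (Sph_neg H hv hη) z hz
    have a3 := hind ω₀ hω z hz
    rw [e1 η hη hη0] at a1
    rw [e1 _ (Sph_neg H hv hη) (by simp [hη0]), emb_neg, H.neg_mulA] at a2
    have a3' : f (pt m p ω₀ z.1 z.2) = 1 := by
      simp only [f, xqpart_pt ω₀ hω.1]
      rw [if_pos ⟨z.2, hzpos, rfl⟩]
    have b1 : F₁ z = 0 := by
      have : (2 : ℝ) • F₁ z = 0 := by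
        rw [two_smul]
        calc F₁ z + F₁ z = (F₁ z + emb v m η * F₂ z) + (F₁ z + -(emb v m η * F₂ z)) := by abel
          _ = 0 := by rw [← a1, ← a2, add_zero]
      simpa using this
    have b2 : F₂ z = 0 := by
      rw [b1, zero_add] at a1
      have := emb_emb H hη (F₂ z)
      rw [← a1, H.mul_zeroA] at this
      simpa using this.symm
    rw [a3', b1, b2, H.mul_zeroA, add_zero] at a3
    exact H.one_neA a3

end Strict

section Extension

variable {conj : A → A} {v : ℕ → A} {m p : ℕ}

/-- Left multiplication operators of the slice Cauchy-Riemann operator. -/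
noncomputable def sliceL (H : IsAltStarAlg A conj) (v : ℕ → A) (m p : ℕ) (w : Fin (m + 1) → ℝ) :
    Option (Fin (p + 1)) → A →L[ℝ] A
  | none => lmul H (emb v m w)
  | some s => lmul H (v s)

/-- The conjugate operators. -/
noncomputable def sliceLb (H : IsAltStarAlg A conj) (v : ℕ → A) (m p : ℕ) (w : Fin (m + 1) → ℝ) :
    Option (Fin (p + 1)) → A →L[ℝ] A
  | none => -lmul H (emb v m w)
  | some s => if (s : ℕ) = 0 then lmul H (v s) else -lmul H (v s)

lemma v_mul_v (H : IsAltStarAlg A conj) (hv : IsHypBasis A conj v m) {s t : ℕ} (hs : 1 ≤ s)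
    (hs' : s ≤ m) (ht : 1 ≤ t) (ht' : t ≤ m) (b : A) :
    v s * (v t * b) + v t * (v s * b) = if s = t then -((2 : ℝ) • b) else 0 := by
  rw [H.alt_lin]
  split_ifs with h
  · subst h
    rw [v_sq H hv hs hs', H.add_mul', H.neg_mulA, H.one_mul', two_smul]; abel
  · rw [hv.anticomm s t hs hs' ht ht' h, neg_add_cancel, H.zero_mulA]

lemma slice_cliff (H : IsAltStarAlg A conj) (hv : IsHypBasis A conj v m) (hp : p < m)
    {w : Fin (m + 1) → ℝ} (hw : w ∈ Sph v m p) (i j : Option (Fin (p + 1))) (b : A) :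
    sliceLb H v m p w i (sliceL H v m p w j b) + sliceLb H v m p w j (sliceL H v m p w i b) =
      if i = j then (2 : ℝ) • b else 0 := by
  have hns : ∀ s : Fin (p + 1),
      sliceLb H v m p w none (sliceL H v m p w (some s) b) +
        sliceLb H v m p w (some s) (sliceL H v m p w none b) = 0 := by
    intro s
    simp only [sliceLb, sliceL]
    by_cases hs : (s : ℕ) = 0
    · simp [hs, lmul_apply, hv.v_zero, H.one_mul']
    · simp only [hs, if_false, neg_apply, lmul_apply]
      rw [v_emb_mul H hv hp hw (by omega) (by omega)]
      abel
  match i, j with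
  | none, none =>
    simp only [sliceLb, sliceL, neg_apply, lmul_apply, emb_emb H hw, if_true, two_smul, neg_neg]
  | none, some s => rw [hns]; simp
  | some s, none => rw [add_comm, hns]; simp
  | some s, some t =>
    simp only [sliceLb, sliceL, Option.some.injEq]
    by_cases hs : (s : ℕ) = 0
    · by_cases ht : (t : ℕ) = 0
      · have : s = t := Fin.ext (by omega)
        subst this
        simp [hs, lmul_apply, hv.v_zero, H.one_mul', two_smul]
      · have : s ≠ t := fun h => ht (h ▸ hs)
        simp [hs, ht, this, lmul_apply, hv.v_zero, H.one_mul']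
    · by_cases ht : (t : ℕ) = 0
      · have : s ≠ t := fun h => hs (h ▸ ht)
        simp [hs, ht, this, lmul_apply, hv.v_zero, H.one_mul']
      · have := v_mul_v H hv (s := s) (t := t) (by omega) (by omega) (by omega) (by omega) b
        simp only [hs, ht, if_false, neg_apply, lmul_apply]
        rw [← neg_add, this]
        by_cases hst : s = t
        · simp [hst]
        · rw [if_neg hst, if_neg (fun h => hst (Fin.ext h)), neg_zero]

/-- The Clifford data of the slice Cauchy-Riemann operator. -/
noncomputable def sliceData (H : IsAltStarAlg A conj) (hv : IsHypBasis A conj v m) (hp : p < m)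
    {w : Fin (m + 1) → ℝ} (hw : w ∈ Sph v m p) :
    CliffData (Option (Fin (p + 1))) ((Fin (p + 1) → ℝ) × ℝ) A where
  e := fun i => match i with
    | none => (0, 1)
    | some s => (Pi.single s 1, 0)
  c := fun i => match i with
    | none => ContinuousLinearMap.snd ℝ _ _
    | some s => (ContinuousLinearMap.proj s).comp (ContinuousLinearMap.fst ℝ (Fin (p + 1) → ℝ) ℝ)
  L := sliceL H v m p w
  Lb := sliceLb H v m p w
  expand := by
    rintro ⟨y, r⟩
    rw [Fintype.sum_option]
    refine Prod.ext ?_ ?_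
    · simp only [Prod.fst_add, Prod.fst_sum, Prod.smul_mk]
      funext t
      simp [Finset.sum_apply, Pi.single_apply]
    · simp [Prod.snd_sum]
  dual := by
    rintro (_ | s) (_ | t)
    · simp
    · simp
    · simp
    · simp [Pi.single_apply]
  norm_le := by
    rintro ⟨y, r⟩
    rw [Fintype.sum_option]
    simp only [ContinuousLinearMap.coe_snd', ContinuousLinearMap.comp_apply,
      ContinuousLinearMap.coe_fst', ContinuousLinearMap.proj_apply]
    have hS : 0 ≤ ∑ s, y s ^ 2 := Finset.sum_nonneg fun s _ => sq_nonneg _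
    rw [Prod.norm_def]
    rcases max_choice ‖y‖ ‖r‖ with h | h
    · simp only [h]
      have : ‖y‖ ≤ Real.sqrt (∑ s, y s ^ 2) := by
        rw [pi_norm_le_iff_of_nonneg (Real.sqrt_nonneg _)]
        intro s
        rw [Real.norm_eq_abs]
        refine Real.abs_le_sqrt ?_
        exact Finset.single_le_sum (f := fun s => y s ^ 2) (fun s _ => sq_nonneg _) (Finset.mem_univ s)
      have h2 := pow_le_pow_left₀ (norm_nonneg y) this 2
      rw [Real.sq_sqrt hS] at h2
      nlinarith [sq_nonneg r]
    · simp only [h]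
      rw [Real.norm_eq_abs, sq_abs]
      linarith
  cliff := slice_cliff H hv hp hw

lemma sliceData_sum (H : IsAltStarAlg A conj) (hv : IsHypBasis A conj v m) (hp : p < m)
    {w : Fin (m + 1) → ℝ} (hw : w ∈ Sph v m p) (h : (Fin (p + 1) → ℝ) × ℝ → A)
    (z : (Fin (p + 1) → ℝ) × ℝ) :
    ∑ k, (sliceData H hv hp hw).L k (fderiv ℝ h z ((sliceData H hv hp hw).e k)) =
      DomCR v m p w h z := by
  rw [Fintype.sum_option, add_comm]
  rfl

lemma D_preconn (H : IsAltStarAlg A conj) (hv : IsHypBasis A conj v m) (hp : p < m)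
    {D : Set ((Fin (p + 1) → ℝ) × ℝ)} (hDrefl : ∀ z ∈ D, reflD p z ∈ D)
    (hdom : IsConnected (OmegaD v m p D)) {z0 : (Fin (p + 1) → ℝ) × ℝ} (hz0 : z0 ∈ D)
    (h0 : z0.2 = 0) : IsPreconnected D := by
  have hη := single_Sph (p := p) H hv (Fin.last m) (by simpa using hp)
  set η : Fin (m + 1) → ℝ := Pi.single (Fin.last m) 1 with hηd
  let g : (Fin (m + 1) → ℝ) → (Fin (p + 1) → ℝ) × ℝ := fun x => (projP m p x, rad m p x)
  have hg : Continuous g := by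
    refine Continuous.prodMk ?_ ?_
    · refine continuous_pi fun s => ?_
      unfold projP
      split_ifs
      · exact continuous_apply _
      · exact continuous_const
    · unfold rad
      refine Real.continuous_sqrt.comp (continuous_finsetSum _ fun s _ => ?_)
      refine Continuous.pow ?_ 2
      unfold xqpart
      split_ifs
      · exact continuous_const
      · exact continuous_apply _
  have hr : Continuous (reflD p) := by unfold reflD; fun_prop
  have hP := hdom.isPreconnected.image g hg.continuousOn
  have hN := hP.image (reflD p) hr.continuousOn
  have hmem : ∀ z ∈ D, (z.1, |z.2|) ∈ g '' OmegaD v m p D := by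
    intro z hz
    refine ⟨pt m p η z.1 z.2, ⟨η, hη, z, hz, rfl⟩, ?_⟩
    simp only [g, projP_pt hp η hη.1, rad_pt H hv hη]
  have hsub : g '' OmegaD v m p D ⊆ D := by
    rintro _ ⟨x, ⟨w, hw, z, hz, rfl⟩, rfl⟩
    simp only [g, projP_pt hp w hw.1, rad_pt H hv hw]
    rcases abs_choice z.2 with h | h
    · rw [h]; exact hz
    · rw [h]; exact hDrefl z hz
  have h1 : z0 ∈ g '' OmegaD v m p D := by
    have := hmem z0 hz0
    rw [h0, abs_zero] at this
    rwa [show z0 = (z0.1, 0) from Prod.ext rfl h0]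
  have h2 : z0 ∈ reflD p '' (g '' OmegaD v m p D) :=
    ⟨z0, h1, Prod.ext rfl (by simp [reflD, h0])⟩
  have hu := hP.union z0 h1 h2 hN
  convert hu using 1
  refine Set.Subset.antisymm ?_ ?_
  · intro z hz
    have := hmem z hz
    rcases abs_choice z.2 with h | h
    · left; rwa [h] at this
    · right
      exact ⟨_, this, Prod.ext rfl (by simp [reflD, h])⟩
  · rintro z (hz | ⟨z', hz', rfl⟩)
    · exact hsub hz
    · exact hDrefl _ (hsub hz')

end Extension

section Main

variable {conj : A → A} {v : ℕ → A} {m p : ℕ}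

/-- The reflection as a continuous linear map. -/
noncomputable def reflL (p : ℕ) : ((Fin (p + 1) → ℝ) × ℝ) →L[ℝ] ((Fin (p + 1) → ℝ) × ℝ) :=
  (ContinuousLinearMap.fst ℝ _ _).prod (-ContinuousLinearMap.snd ℝ _ _)

lemma reflL_apply (z : (Fin (p + 1) → ℝ) × ℝ) : reflL p z = reflD p z := rfl

lemma reflD_reflD (z : (Fin (p + 1) → ℝ) × ℝ) : reflD p (reflD p z) = z := by
  simp [reflD]

lemma stem_CR (H : IsAltStarAlg A conj) (hv : IsHypBasis A conj v m) (hp : p < m)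
    {η : Fin (m + 1) → ℝ} (hη : η ∈ Sph v m p) {k : (Fin (p + 1) → ℝ) × ℝ → A}
    {z : (Fin (p + 1) → ℝ) × ℝ} (h1 : DifferentiableAt ℝ k z)
    (h2 : DifferentiableAt ℝ k (reflD p z)) (c1 : DomCR v m p η k z = 0)
    (c2 : DomCR v m p η k (reflD p z) = 0) :
    DopSx v p (fun z => (2 : ℝ)⁻¹ • (k z + k (reflD p z))) z -
      pdSr p (fun z => emb v m η * ((-(2 : ℝ)⁻¹) • (k z - k (reflD p z)))) z = 0 ∧
    DbaropSx v p (fun z => emb v m η * ((-(2 : ℝ)⁻¹) • (k z - k (reflD p z)))) z +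
      pdSr p (fun z => (2 : ℝ)⁻¹ • (k z + k (reflD p z))) z = 0 := by
  have hk' : HasFDerivAt (fun z => k (reflD p z)) ((fderiv ℝ k (reflD p z)).comp (reflL p)) z :=
    HasFDerivAt.comp z (f := reflL p) h2.hasFDerivAt (reflL p).hasFDerivAt
  have d1 : fderiv ℝ (fun z => (2 : ℝ)⁻¹ • (k z + k (reflD p z))) z =
      (2 : ℝ)⁻¹ • (fderiv ℝ k z + (fderiv ℝ k (reflD p z)).comp (reflL p)) :=
    ((h1.hasFDerivAt.add hk').const_smul _).fderiv
  have d2 : fderiv ℝ (fun z => emb v m η * ((-(2 : ℝ)⁻¹) • (k z - k (reflD p z)))) z =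
      (lmul H (emb v m η)).comp
        ((-(2 : ℝ)⁻¹) • (fderiv ℝ k z - (fderiv ℝ k (reflD p z)).comp (reflL p))) :=
    ((lmul H (emb v m η)).hasFDerivAt.comp z
      ((h1.hasFDerivAt.sub hk').const_smul (-(2 : ℝ)⁻¹))).fderiv
  have rs : ∀ s : Fin (p + 1), reflL p (Pi.single s 1, 0) = (Pi.single s 1, 0) := by
    intro s; simp [reflL_apply, reflD]
  have rr : reflL p (0, 1) = -(0, 1) := by
    simp [reflL_apply, reflD]
  unfold DomCR DopSx pdSx pdSr at c1 c2
  unfold DopSx DbaropSx pdSx pdSr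
  rw [d1, d2]
  simp only [ContinuousLinearMap.comp_apply, smul_apply, add_apply, sub_apply, lmul_apply, rs, rr,
    map_neg]
  have e1 := eq_neg_of_add_eq_zero_left c1
  have e2 := eq_neg_of_add_eq_zero_left c2
  constructor
  · simp only [H.mul_smul', H.mul_add', smul_add, Finset.sum_add_distrib, ← Finset.smul_sum, e1, e2,
      H.mul_subA, H.mul_negA]
    module
  · rw [sum_v_emb' H hv hp hη (fun s : Fin (p + 1) => -(2 : ℝ)⁻¹ •
      ((fderiv ℝ k z) (Pi.single s 1, 0) - (fderiv ℝ k (reflD p z)) (Pi.single s 1, 0)))]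
    simp only [H.mul_smul', H.mul_subA, ← Finset.smul_sum, Finset.sum_sub_distrib, e1, e2,
      H.mul_negA, emb_emb H hη]
    module

lemma gsm_sub (H : IsAltStarAlg A conj) (hv : IsHypBasis A conj v m) (hp : p < m)
    {D : Set ((Fin (p + 1) → ℝ) × ℝ)} (hD : IsOpen D) (hDrefl : ∀ z ∈ D, reflD p z ∈ D)
    (hdom : IsConnected (OmegaD v m p D))
    (hne : (OmegaD v m p D ∩ {x | xqpart m p x = 0}).Nonempty)
    {f : (Fin (m + 1) → ℝ) → A} (hf : GSM v m p f (OmegaD v m p D)) : MemGSR v m p D f := by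
  haveI := H.finDim
  have hη := single_Sph (p := p) H hv (Fin.last m) (by simpa using hp)
  set η : Fin (m + 1) → ℝ := Pi.single (Fin.last m) 1 with hηd
  obtain ⟨z0, hz0, h0⟩ : ∃ z0 ∈ D, z0.2 = 0 := by
    obtain ⟨_, ⟨w, hw, z, hz, rfl⟩, hx⟩ := hne
    refine ⟨z, hz, ?_⟩
    have hx : xqpart m p _ = 0 := hx
    rw [xqpart_pt w hw.1] at hx
    rcases smul_eq_zero.1 hx with h | h
    · exact h
    · rw [mem_Sph H hv, h] at hw
      simp at hw
  have hpre := D_preconn H hv hp hDrefl hdom hz0 h0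
  have hslice : ∀ w ∈ Sph v m p, ContDiffOn ℝ 1 (sliceFun m p f w) D ∧
      ∀ z ∈ D, DomCR v m p w (sliceFun m p f w) z = 0 := by
    intro w hw
    have := hf w hw
    rwa [slice_eq H hv hp hDrefl hw] at this
  set k := sliceFun m p f η with hk
  obtain ⟨hkc, hkD⟩ := hslice η hη
  have hkd : ∀ z ∈ D, DifferentiableAt ℝ k z := fun z hz =>
    (hkc.contDiffAt (hD.mem_nhds hz)).differentiableAt (by simp)
  have hkc' : ContDiffOn ℝ 1 (fun z => k (reflD p z)) D :=
    hkc.comp (f := reflL p) (reflL p).contDiff.contDiffOn (fun z hz => hDrefl z hz)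
  set F₁ : (Fin (p + 1) → ℝ) × ℝ → A := fun z => (2 : ℝ)⁻¹ • (k z + k (reflD p z)) with hF1
  set F₂ : (Fin (p + 1) → ℝ) × ℝ → A :=
    fun z => emb v m η * ((-(2 : ℝ)⁻¹) • (k z - k (reflD p z))) with hF2
  have c1 : ContDiffOn ℝ 1 F₁ D := (hkc.add hkc').const_smul _
  have c2 : ContDiffOn ℝ 1 F₂ D :=
    (lmul H (emb v m η)).contDiff.comp_contDiffOn ((hkc.sub hkc').const_smul (-(2 : ℝ)⁻¹))
  have hcr : StemCR v p D F₁ F₂ := fun z hz =>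
    stem_CR H hv hp hη (hkd z hz) (hkd _ (hDrefl z hz)) (hkD z hz) (hkD _ (hDrefl z hz))
  refine ⟨F₁, F₂, ?_, c1, c2, ?_, hcr⟩
  · intro z hz
    simp only [hF1, hF2, reflD_reflD]
    constructor
    · rw [add_comm]
    · rw [← H.mul_negA, ← smul_neg, neg_sub]
  · intro w hw
    obtain ⟨hwc, hwD⟩ := hslice w hw
    set G : (Fin (p + 1) → ℝ) × ℝ → A := fun z => F₁ z + emb v m w * F₂ z with hG
    have hGc : ContDiffOn ℝ 1 G D := c1.add ((lmul H (emb v m w)).contDiff.comp_contDiffOn c2)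
    have hsol : (sliceData H hv hp hw).Sol (fun z => sliceFun m p f w z - G z) D := by
      refine ⟨hwc.sub hGc, fun z hz => ?_⟩
      rw [sliceData_sum]
      have hn := hD.mem_nhds hz
      have d1 : DifferentiableAt ℝ (sliceFun m p f w) z :=
        (hwc.contDiffAt hn).differentiableAt (by simp)
      have d2 : DifferentiableAt ℝ G z := (hGc.contDiffAt hn).differentiableAt (by simp)
      have e1 : DifferentiableAt ℝ F₁ z := (c1.contDiffAt hn).differentiableAt (by simp)
      have e2 : DifferentiableAt ℝ F₂ z := (c2.contDiffAt hn).differentiableAt (by simp)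
      have hGD : DomCR v m p w G z = 0 := by
        rw [hG, DomCR_stem H hv hp hw e1 e2, (hcr z hz).1, (hcr z hz).2, H.mul_zeroA, add_zero]
      have hfD := hwD z hz
      have hfd : fderiv ℝ (fun z => sliceFun m p f w z - G z) z =
        fderiv ℝ (sliceFun m p f w) z - fderiv ℝ G z := fderiv_fun_sub d1 d2
      unfold DomCR DopSx pdSx pdSr at hGD hfD ⊢
      rw [hfd]
      simp only [sub_apply, H.mul_subA, Finset.sum_sub_distrib]
      rw [sub_add_sub_comm, hfD, hGD, sub_zero]
    have hvan : ∀ y ∈ D, (sliceData H hv hp hw).c none y = 0 →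
        sliceFun m p f w y - G y = 0 := by
      intro y hy hy0
      have hy0 : y.2 = 0 := hy0
      have hr : reflD p y = y := Prod.ext rfl (by simp [reflD, hy0])
      simp only [hG, hF1, hF2, hr, sub_self, smul_zero, H.mul_zeroA, add_zero, hk, sliceFun, hy0, pt,
        zero_smul]
      rw [← two_smul ℝ, smul_smul]
      norm_num
    have hfin := (sliceData H hv hp hw).identity_hyperplane hD hpre hsol none hz0 h0 hvan
    intro z hz
    exact sub_eq_zero.1 (hfin z hz)

end Main


/-- Relation between generalized partial-slice regular and generalized partial-slice
monogenic functions on a p-symmetric domain `Ω = Ω_D`: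
(i) if `Ω ∩ ℝ^{p+1} = ∅` then `GSR(Ω_D) ⊊ GSM(Ω)`;
(ii) if `Ω ∩ ℝ^{p+1} ≠ ∅` then `GSM(Ω) = GSR(Ω_D)`. -/
theorem gsr_gsm_relation
    {A : Type*} [NormedAddCommGroup A] [NormedSpace ℝ A] [Mul A] [One A]
    (conj : A → A) (H : IsAltStarAlg A conj)
    (v : ℕ → A) (m p : ℕ) (hv : IsHypBasis A conj v m) (hp : p < m)
    (D : Set ((Fin (p + 1) → ℝ) × ℝ)) (hD : IsOpen D)
    (hDrefl : ∀ z ∈ D, reflD p z ∈ D)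
    (hdom : IsConnected (OmegaD v m p D)) :
    ((OmegaD v m p D ∩ {x | xqpart m p x = 0}) = ∅ →
      {f : (Fin (m + 1) → ℝ) → A | MemGSR v m p D f} ⊂
        {f : (Fin (m + 1) → ℝ) → A | GSM v m p f (OmegaD v m p D)}) ∧
    ((OmegaD v m p D ∩ {x | xqpart m p x = 0}).Nonempty →
      {f : (Fin (m + 1) → ℝ) → A | GSM v m p f (OmegaD v m p D)} =
        {f : (Fin (m + 1) → ℝ) → A | MemGSR v m p D f}) := by
  constructor
  · intro hemp
    rw [Set.ssubset_iff_exists]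
    refine ⟨fun f hf => gsr_sub H hv hp hD hDrefl hf, ?_⟩
    obtain ⟨f, h1, h2⟩ := strict_part H hv hp hDrefl hdom hemp
    exact ⟨f, h1, h2⟩
  · intro hne
    ext f
    exact ⟨fun hf => gsm_sub H hv hp hD hDrefl hdom hne hf,
      fun hf => gsr_sub H hv hp hD hDrefl hf⟩

end GPSM
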